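/- For every natural number n, the number of permutations of length n+1 avoiding all three of the patterns 2143, 3142, and 246135 equals the n-th large Schröder number, i.e., equals the sum over k from 0 to n of binomial(n+k, n−k) times the k-th Catalan number. -/

import Mathlib

/-- `π` contains the pattern `σ`: there is a strictly increasing choice of positions
on which `π` is order-isomorphic to `σ`. -/
def Contains {n k : ℕ} (π : Equiv.Perm (Fin n)) (σ : Equiv.Perm (Fin k)) : Prop :=
  ∃ f : Fin k → Fin n, StrictMono f ∧ ∀ a b : Fin k, σ a < σ b ↔ π (f a) < π (f b)

/-- `π` avoids the pattern `σ`. -/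
def Avoids {n k : ℕ} (π : Equiv.Perm (Fin n)) (σ : Equiv.Perm (Fin k)) : Prop :=
  ¬ Contains π σ
noncomputable def p2143 : Equiv.Perm (Fin 4) := Equiv.ofBijective ![1, 0, 3, 2] (by decide)
noncomputable def p3142 : Equiv.Perm (Fin 4) := Equiv.ofBijective ![2, 0, 3, 1] (by decide)
noncomputable def p246135 : Equiv.Perm (Fin 6) := Equiv.ofBijective ![1, 3, 5, 0, 2, 4] (by decide)

/-! Count the avoiders whose first `r` entries increase and contain the first half of no pattern
`2413` whose second half comes later. If such a permutation does not start with `0`, the maximal run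
right after the entry `0` of entries smaller than all those before `0` is a block of consecutive
values; the block may be any avoider, and in what remains `1` precedes `0`. In an avoider of the
latter kind that does not end with `0`, the entries exceeding the last one and following each other,
either from the start or right after the prefix, are again a block of consecutive values that can be
split off. Splitting off a block turns into a product of generating functions. The resulting system
determines the coefficients recursively, so it suffices to exhibit a solution, and there is one that
is geometric in `r`: the series `γ ^ r * (1 + F)` with `F = X * S` and `γ = X / (1 - F)`, where
`S = 1 + X * S + X * S ^ 2` is the generating function of the large Schröder numbers. -/

section Series

open PowerSeries

/-- The functional equations satisfied by the generating functions in `n` of `avoiders r n`,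
`oneZeroAvoiders r n` and `risingAvoiders r n`; the series `T 0` and `V 0` are unconstrained. -/
structure IsPrefixSystem {R : Type*} [CommRing R] (E T V : ℕ → R⟦X⟧) : Prop where
  eq_one_add : E 0 = 1 + E 1
  eq_succ : ∀ r, E (r + 1) = X * E r + E 0 * T (r + 1)
  oneZero_eq : ∀ r, T (r + 1) = X * E (r + 1) + E (r + 1) * V 1 + V (r + 1)
  rising_eq : ∀ r, V (r + 1) = E 0 * (V (r + 2) + X * T (r + 1) - X * T (r + 2))
  X_pow_dvd : ∀ r, X ^ (r + 1) ∣ V (r + 1)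

variable {R : Type*} [CommRing R]

theorem pow_succ_dvd_mul_sub_mul {x a a' b b' : R} {n : ℕ} (ha : x ^ n ∣ a - a')
    (hb : x ^ (n + 1) ∣ b - b') (hx : x ∣ b) : x ^ (n + 1) ∣ a * b - a' * b' := by
  have h : a * b - a' * b' = (a - a') * b + a' * (b - b') := by ring
  rw [h, pow_succ]
  exact dvd_add (mul_dvd_mul ha hx) (Dvd.dvd.mul_left (pow_succ x n ▸ hb) _)

theorem pow_succ_dvd_self_mul_sub {x a a' : R} {n : ℕ} (ha : x ^ n ∣ a - a') :
    x ^ (n + 1) ∣ x * a - x * a' := by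
  rw [← mul_sub, pow_succ']
  exact mul_dvd_mul_left x ha

namespace IsPrefixSystem

variable {E T V E' T' V' : ℕ → R⟦X⟧}

theorem X_dvd_rising (h : IsPrefixSystem E T V) (r : ℕ) : X ∣ V (r + 1) :=
  (dvd_pow_self X r.succ_ne_zero).trans (h.X_pow_dvd r)

theorem X_dvd_oneZero (h : IsPrefixSystem E T V) (r : ℕ) : X ∣ T (r + 1) := by
  rw [h.oneZero_eq]
  exact ((dvd_mul_right X _).add ((h.X_dvd_rising 0).mul_left _)).add (h.X_dvd_rising r)

/-- Agreement of two pairs of sequences of power series modulo `X ^ n`, on the indices constrained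
by `IsPrefixSystem`; the third sequences then agree modulo `X ^ (n + 1)`. -/
structure AgreeMod (n : ℕ) (E T E' T' : ℕ → R⟦X⟧) : Prop where
  prefix_dvd : ∀ r, X ^ n ∣ E r - E' r
  oneZero_dvd : ∀ r, X ^ n ∣ T (r + 1) - T' (r + 1)

theorem rising_dvd_succ (h : IsPrefixSystem E T V) (h' : IsPrefixSystem E' T' V') {n : ℕ}
    (hn : AgreeMod n E T E' T') (r : ℕ) : X ^ (n + 1) ∣ V (r + 1) - V' (r + 1) := by
  -- For `n ≤ r` both series are divisible by `X ^ (n + 1)`; then descend in `r`.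
  induction h_gap : n - r generalizing r with
  | zero =>
    have hpow := pow_dvd_pow (X : R⟦X⟧) (Nat.succ_le_succ (Nat.sub_eq_zero_iff_le.mp h_gap))
    exact dvd_sub (hpow.trans (h.X_pow_dvd r)) (hpow.trans (h'.X_pow_dvd r))
  | succ d ih =>
    rw [h.rising_eq, h'.rising_eq]
    refine pow_succ_dvd_mul_sub_mul (hn.prefix_dvd 0) ?_
      (((h.X_dvd_rising (r + 1)).add (dvd_mul_right X _)).sub (dvd_mul_right X _))
    have hT := pow_succ_dvd_self_mul_sub (hn.oneZero_dvd r)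
    have hT' := pow_succ_dvd_self_mul_sub (hn.oneZero_dvd (r + 1))
    convert ((ih (r + 1) (by lia)).add hT).sub hT' using 1
    ring

theorem agreeMod_succ (h : IsPrefixSystem E T V) (h' : IsPrefixSystem E' T' V') {n : ℕ}
    (hn : AgreeMod n E T E' T') : AgreeMod (n + 1) E T E' T' := by
  have hV := h.rising_dvd_succ h' hn
  have hT : ∀ r, X ^ (n + 1) ∣ T (r + 1) - T' (r + 1) := by
    intro r
    rw [h.oneZero_eq, h'.oneZero_eq, add_sub_add_comm, add_sub_add_comm]
    exact ((pow_succ_dvd_self_mul_sub (hn.prefix_dvd _)).add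
      (pow_succ_dvd_mul_sub_mul (hn.prefix_dvd _) (hV 0) (h.X_dvd_rising 0))).add (hV r)
  have hE : ∀ r, X ^ (n + 1) ∣ E (r + 1) - E' (r + 1) := by
    intro r
    rw [h.eq_succ, h'.eq_succ, add_sub_add_comm]
    exact (pow_succ_dvd_self_mul_sub (hn.prefix_dvd _)).add
      (pow_succ_dvd_mul_sub_mul (hn.prefix_dvd _) (hT r) (h.X_dvd_oneZero r))
  refine ⟨fun r => ?_, hT⟩
  cases r with
  | zero =>
    rw [h.eq_one_add, h'.eq_one_add, add_sub_add_left_eq_sub]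
    exact hE 0
  | succ r => exact hE r

theorem unique (h : IsPrefixSystem E T V) (h' : IsPrefixSystem E' T' V') (r : ℕ) :
    E r = E' r := by
  have agree : ∀ n, AgreeMod n E T E' T' := by
    intro n
    induction n with
    | zero => constructor <;> simp
    | succ n ih => exact h.agreeMod_succ h' ih
  refine sub_eq_zero.mp (PowerSeries.ext fun n => ?_)
  simpa using X_pow_dvd_iff.mp ((agree (n + 1)).prefix_dvd r) n n.lt_succ_self

theorem of_geometric {F γ : R⟦X⟧} (hγ : γ = X + F * γ) (hF : F = γ * (1 + F)) (hX : X ∣ γ) :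
    IsPrefixSystem (fun r => γ ^ r * (1 + F)) (fun r => γ ^ r * F) (fun r => γ ^ (r + 1) * F) where
  eq_one_add := by linear_combination hF
  eq_succ r := by linear_combination γ ^ r * (1 + F) * hγ
  oneZero_eq r := by
    linear_combination γ ^ (r + 1) * (1 + F) * hγ + γ ^ (r + 1) * (1 + γ * F) * hF
  rising_eq r := by
    linear_combination
      (1 + F) * F * γ ^ (r + 1) * (1 - γ) * hγ + γ ^ (r + 2) * F ^ 2 * hF
  X_pow_dvd r := ((pow_dvd_pow_of_dvd hX _).trans (pow_dvd_pow γ (r + 1).le_succ)).mul_right F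

end IsPrefixSystem

/-- The explicit formula for the `n`-th large Schröder number. -/
def schroederSum (n : ℕ) : ℕ :=
  ∑ k ∈ Finset.range (n + 1), Nat.choose (n + k) (n - k) * catalan k

/-- The generating function of `schroederSum`. -/
def schroederSeries : ℤ⟦X⟧ := mk fun n => (schroederSum n : ℤ)

/-- The generating function of the Catalan numbers, evaluated at `X / (1 - X) ^ 2`. -/
noncomputable def catalanSubst : ℤ⟦X⟧ :=
  (catalanSeries.map (Nat.castRingHom ℤ)).subst (X * mk 1 ^ 2 : ℤ⟦X⟧)

theorem hasSubst_X_mul_mk_one_sq : HasSubst (X * mk 1 ^ 2 : ℤ⟦X⟧) :=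
  HasSubst.of_constantCoeff_zero' (by simp)

theorem catalanSubst_eq : catalanSubst = 1 + X * mk 1 ^ 2 * catalanSubst ^ 2 := by
  have h := congrArg (fun f => substAlgHom hasSubst_X_mul_mk_one_sq (R := ℤ)
    (PowerSeries.map (Nat.castRingHom ℤ) f)) catalanSeries_sq_mul_X_add_one
  simp only [map_add, map_mul, map_pow, map_one, PowerSeries.map_X, substAlgHom_X,
    coe_substAlgHom] at h
  change catalanSubst ^ 2 * (X * mk 1 ^ 2) + 1 = catalanSubst at h
  linear_combination -h

theorem coeff_catalanSubst {j n : ℕ} (hj : j ≤ n) :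
    coeff j catalanSubst =
      ∑ k ∈ Finset.range (n + 1), (catalan k : ℤ) * coeff j ((X * mk 1 ^ 2 : ℤ⟦X⟧) ^ k) := by
  rw [catalanSubst, coeff_subst' hasSubst_X_mul_mk_one_sq,
    finsum_eq_sum_of_support_subset (s := Finset.range (n + 1))]
  · simp
  · intro k hk
    by_contra hkn
    have hjk : ¬ k ≤ j := by simp only [Finset.coe_range, Set.mem_Iio] at hkn; lia
    exact hk (by simp [mul_pow, coeff_X_pow_mul', hjk])

theorem coeff_mk_one_mul_pow {k n : ℕ} (hk : k ≤ n) :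
    coeff n (mk 1 * (X * mk 1 ^ 2) ^ k : ℤ⟦X⟧) = (n + k).choose (n - k) := by
  have h : (mk 1 * (X * mk 1 ^ 2) ^ k : ℤ⟦X⟧) = X ^ k * mk 1 ^ (2 * k + 1) := by ring
  rw [h, coeff_X_pow_mul', if_pos hk, mk_one_pow_eq_mk_choose_add, coeff_mk,
    Nat.choose_symm_of_eq_add (by lia : n + k = n - k + 2 * k)]
  congr 2
  lia

theorem schroederSeries_eq_mul : schroederSeries = mk 1 * catalanSubst := by
  ext n
  calc coeff n schroederSeries
      = ∑ k ∈ Finset.range (n + 1),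
          (catalan k : ℤ) * coeff n (mk 1 * (X * mk 1 ^ 2) ^ k : ℤ⟦X⟧) := by
        rw [schroederSeries, coeff_mk, schroederSum, Nat.cast_sum]
        refine Finset.sum_congr rfl fun k hk => ?_
        rw [coeff_mk_one_mul_pow (Finset.mem_range_succ_iff.mp hk), Nat.cast_mul, mul_comm]
    _ = ∑ p ∈ Finset.HasAntidiagonal.antidiagonal n, ∑ k ∈ Finset.range (n + 1), (catalan k : ℤ) *
          (coeff p.1 (mk 1) * coeff p.2 ((X * mk 1 ^ 2 : ℤ⟦X⟧) ^ k)) := by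
        rw [Finset.sum_comm]
        simp_rw [coeff_mul, Finset.mul_sum]
    _ = coeff n (mk 1 * catalanSubst) := by
        rw [coeff_mul]
        refine Finset.sum_congr rfl fun p hp => ?_
        rw [coeff_catalanSubst (Finset.HasAntidiagonal.antidiagonal.snd_le hp), Finset.mul_sum]
        exact Finset.sum_congr rfl fun k _ => mul_left_comm _ _ _

theorem schroederSeries_eq :
    schroederSeries = 1 + X * schroederSeries + X * schroederSeries ^ 2 := by
  rw [schroederSeries_eq_mul]
  linear_combination
    catalanSubst_eq + catalanSubst * mk_one_mul_one_sub_eq_one ℤ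

theorem IsPrefixSystem.eq_one_add_X_mul_schroederSeries {E T V : ℕ → ℤ⟦X⟧}
    (h : IsPrefixSystem E T V) : E 0 = 1 + X * schroederSeries := by
  obtain ⟨u, hu⟩ : ∃ u, (1 - X * schroederSeries) * u = 1 :=
    IsUnit.exists_right_inv (by simp [isUnit_iff_constantCoeff])
  have hsol := IsPrefixSystem.of_geometric (F := X * schroederSeries) (γ := X * u)
    (by linear_combination X * hu)
    (by linear_combination (-X * schroederSeries) * hu + X * u * schroederSeries_eq)
    (dvd_mul_right X u)
  simpa using h.unique hsol 0

end Series

section Permutations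

/-- `p` restricts to a permutation of `{0, …, n - 1}`. The values from `n` on are fixed to `0`, so
that there is exactly one such `p` for each permutation. -/
structure IsPermOn (n : ℕ) (p : ℕ → ℕ) : Prop where
  lt : ∀ i, i < n → p i < n
  inj : ∀ i j, i < n → j < n → p i = p j → i = j
  eq_zero : ∀ i, n ≤ i → p i = 0

namespace IsPermOn

variable {n : ℕ} {p : ℕ → ℕ}

theorem injOn (hp : IsPermOn n p) : Set.InjOn p (Set.Iio n) := fun _ hi _ hj h =>
  hp.inj _ _ hi hj h

theorem surj (hp : IsPermOn n p) {v : ℕ} (hv : v < n) : ∃ i, i < n ∧ p i = v := by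
  have h := Finset.surjOn_of_injOn_of_card_le (s := Finset.range n) (t := Finset.range n) p
    (fun i hi => by simpa using hp.lt i (by simpa using hi)) (by simpa using hp.injOn) le_rfl
  obtain ⟨i, hi, rfl⟩ := h (by simpa using hv)
  exact ⟨i, by simpa using hi, rfl⟩

theorem eq_of_eqOn {q : ℕ → ℕ} (hp : IsPermOn n p) (hq : IsPermOn n q)
    (h : ∀ i, i < n → p i = q i) : p = q := by
  funext i
  obtain hi | hi := lt_or_ge i n
  · exact h i hi
  · rw [hp.eq_zero i hi, hq.eq_zero i hi]

theorem finite (n : ℕ) : {p | IsPermOn n p}.Finite := by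
  refine Set.Finite.of_finite_image (f := fun p (i : Fin n) => p i) ?_ ?_
  · refine (Set.Finite.pi' (fun _ : Fin n => Set.finite_Iio n)).subset ?_
    rintro _ ⟨p, hp, rfl⟩ i
    exact hp.lt i i.2
  · exact fun p hp q hq h => eq_of_eqOn hp hq fun i hi => congrFun h ⟨i, hi⟩

theorem sub_card_le (hp : IsPermOn n p) {I : Finset ℕ} (hI : I ⊆ Finset.range n) {i : ℕ}
    (h : ∀ j, j < n → j ∉ I → p j < p i) : n - I.card ≤ p i := by
  have hcard := Finset.card_le_card_of_injOn (s := Finset.range n \ I) (t := Finset.range (p i)) p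
    (fun j hj => by
      obtain ⟨hj, hjI⟩ := Finset.mem_sdiff.mp hj
      exact Finset.mem_range.mpr (h j (Finset.mem_range.mp hj) hjI))
    (hp.injOn.mono fun j hj => Finset.mem_range.mp (Finset.mem_sdiff.mp hj).1)
  rwa [Finset.card_sdiff_of_subset hI, Finset.card_range, Finset.card_range] at hcard

theorem lt_card (hp : IsPermOn n p) {I : Finset ℕ} (hI : I ⊆ Finset.range n) {i : ℕ} (hi : i < n)
    (h : ∀ j, j < n → j ∉ I → p i < p j) : p i < I.card := by
  have hcard := Finset.card_le_card_of_injOn (s := Finset.range n \ I)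
    (t := Finset.Ioo (p i) n) p
    (fun j hj => by
      obtain ⟨hj, hjI⟩ := Finset.mem_sdiff.mp hj
      have hj := Finset.mem_range.mp hj
      exact Finset.mem_Ioo.mpr ⟨h j hj hjI, hp.lt j hj⟩)
    (hp.injOn.mono fun j hj => Finset.mem_range.mp (Finset.mem_sdiff.mp hj).1)
  rw [Finset.card_sdiff_of_subset hI, Finset.card_range, Nat.card_Ioo] at hcard
  have hle := Finset.card_le_card hI
  rw [Finset.card_range] at hle
  have hin := hp.lt i hi
  lia

end IsPermOn

/-- The increasing map whose image misses exactly the interval `[s, s + k)`. -/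
def skip (s k i : ℕ) : ℕ := if i < s then i else i + k

/-- The permutation obtained from a permutation `σ` of length `m` by inserting a copy of a
permutation `H` of length `k` at the positions `[s, s + k)` with the values `[v, v + k)`. -/
def insertBlock (s v k m : ℕ) (H σ : ℕ → ℕ) (i : ℕ) : ℕ :=
  if i < s then skip v k (σ i)
  else if i < s + k then v + H (i - s)
  else if i < m + k then skip v k (σ (i - k))
  else 0

/-- The increasing positions `φ 0, …, φ (m - 1)` in a permutation `p` of length `n` carry a copy of
the permutation `q` of length `m`. -/
structure IsOccurrence (φ : ℕ → ℕ) (m : ℕ) (q : ℕ → ℕ) (n : ℕ) (p : ℕ → ℕ) : Prop where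
  strictMono : ∀ i j, i < j → j < m → φ i < φ j
  lt : ∀ i, i < m → φ i < n
  lt_iff : ∀ i j, i < m → j < m → (q i < q j ↔ p (φ i) < p (φ j))

section InsertBlock

variable {s v k m i j : ℕ} {H σ p : ℕ → ℕ}

theorem skip_lt_skip_iff : skip s k i < skip s k j ↔ i < j := by
  grind [skip]

theorem skip_lt_add_iff (hs : s ≤ m) : skip s k i < m + k ↔ i < m := by
  grind [skip]

theorem exists_add_or_skip (s k i : ℕ) : (∃ j < k, i = s + j) ∨ ∃ j, i = skip s k j := by
  by_cases h : s ≤ i ∧ i < s + k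
  · exact Or.inl ⟨i - s, by lia, by lia⟩
  · exact Or.inr ⟨if i < s then i else i - k, by grind [skip]⟩

theorem insertBlock_add (hi : i < k) : insertBlock s v k m H σ (s + i) = v + H i := by
  simp [insertBlock, hi]

theorem insertBlock_skip (hi : i < m) :
    insertBlock s v k m H σ (skip s k i) = skip v k (σ i) := by
  grind [insertBlock, skip]

theorem isOccurrence_insertBlock_add (hs : s ≤ m) :
    IsOccurrence (s + ·) k H (m + k) (insertBlock s v k m H σ) where
  strictMono i j hij _ := Nat.add_lt_add_left hij s
  lt i hi := Nat.add_lt_add_of_le_of_lt hs hi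
  lt_iff i j hi hj := by rw [insertBlock_add hi, insertBlock_add hj, Nat.add_lt_add_iff_left]

theorem isOccurrence_insertBlock_skip (hs : s ≤ m) :
    IsOccurrence (skip s k) m σ (m + k) (insertBlock s v k m H σ) where
  strictMono i j hij _ := skip_lt_skip_iff.mpr hij
  lt i hi := (skip_lt_add_iff hs).mpr hi
  lt_iff i j hi hj := by
    rw [insertBlock_skip hi, insertBlock_skip hj, skip_lt_skip_iff]

theorem isPermOn_insertBlock (hs : s ≤ m) (hv : v ≤ m) (hH : IsPermOn k H) (hσ : IsPermOn m σ) :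
    IsPermOn (m + k) (insertBlock s v k m H σ) where
  lt i hi := by
    have := hH.lt (i - s)
    have := hσ.lt i
    have := hσ.lt (i - k)
    grind [insertBlock, skip]
  inj i j hi hj h := by
    have := hH.lt (i - s)
    have := hH.lt (j - s)
    have := hH.inj (i - s) (j - s)
    have := hσ.inj (if i < s then i else i - k) (if j < s then j else j - k)
    grind [insertBlock, skip]
  eq_zero i hi := by grind [insertBlock]

theorem IsPermOn.restrict_block (hs : s ≤ m) (hp : IsPermOn (m + k) p)
    (hblock : ∀ i, i < k → v ≤ p (s + i) ∧ p (s + i) < v + k) :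
    IsPermOn k fun i => if i < k then p (s + i) - v else 0 where
  lt i hi := by grind
  inj i j hi hj h := by
    have := hp.inj (s + i) (s + j)
    grind
  eq_zero i hi := by grind

theorem IsPermOn.lt_or_le_of_skip (hs : s ≤ m) (hp : IsPermOn (m + k) p)
    (hblock : ∀ i, i < k → v ≤ p (s + i) ∧ p (s + i) < v + k) (hi : i < m) :
    p (skip s k i) < v ∨ v + k ≤ p (skip s k i) := by
  by_contra! h
  obtain ⟨j, hj, hjv⟩ := (hp.restrict_block hs hblock).surj (v := p (skip s k i) - v) (by lia)
  have := hp.inj (skip s k i) (s + j) ((skip_lt_add_iff hs).mpr hi) (by lia)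
  grind [skip]

theorem IsPermOn.exists_eq_insertBlock (hs : s ≤ m) (hv : v ≤ m)
    (hp : IsPermOn (m + k) p) (hblock : ∀ i, i < k → v ≤ p (s + i) ∧ p (s + i) < v + k) :
    ∃ H σ, IsPermOn k H ∧ IsPermOn m σ ∧ p = insertBlock s v k m H σ := by
  have outside := fun i (hi : i < m) => hp.lt_or_le_of_skip hs hblock hi
  let σ i :=
    if i < m then if p (skip s k i) < v then p (skip s k i) else p (skip s k i) - k else 0
  have hσ : IsPermOn m σ :=
    { lt := fun i hi => by
        have := hp.lt (skip s k i) ((skip_lt_add_iff hs).mpr hi)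
        have := outside i hi
        grind
      inj := fun i j hi hj h => by
        have := hp.inj (skip s k i) (skip s k j) ((skip_lt_add_iff hs).mpr hi)
          ((skip_lt_add_iff hs).mpr hj)
        have := outside i hi
        have := outside j hj
        grind [skip]
      eq_zero := fun i hi => by grind }
  refine ⟨_, σ, hp.restrict_block hs hblock, hσ, funext fun i => ?_⟩
  obtain hi | hi := le_or_gt (m + k) i
  · grind [insertBlock, hp.eq_zero i hi]
  obtain ⟨j, hj, rfl⟩ | ⟨j, rfl⟩ := exists_add_or_skip s k i
  · rw [insertBlock_add hj]
    grind
  · have hj := (skip_lt_add_iff hs).mp hi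
    have := outside j hj
    rw [insertBlock_skip hj]
    grind [skip]

theorem insertBlock_injective {H' σ' : ℕ → ℕ} (hH : IsPermOn k H) (hH' : IsPermOn k H')
    (hσ : IsPermOn m σ) (hσ' : IsPermOn m σ')
    (h : insertBlock s v k m H σ = insertBlock s v k m H' σ') : H = H' ∧ σ = σ' := by
  constructor
  · refine hH.eq_of_eqOn hH' fun i hi => ?_
    have := congrFun h (s + i)
    rwa [insertBlock_add hi, insertBlock_add hi, Nat.add_left_cancel_iff] at this
  · refine hσ.eq_of_eqOn hσ' fun i hi => ?_
    have := congrFun h (skip s k i)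
    rw [insertBlock_skip hi, insertBlock_skip hi] at this
    grind [skip]

end InsertBlock

end Permutations

section Avoidance

/-- The entries of `p` at `i`, `j`, `k`, `l` are ordered as in `2143` or as in `3142`, according to
the relative order of the first and the last one. -/
abbrev Forms2143Or3142 (p : ℕ → ℕ) (i j k l : ℕ) : Prop :=
  p j < p i ∧ p j < p l ∧ p i < p k ∧ p l < p k

/-- The entries of `p` at `a`, `b`, `c`, `d`, `e`, `f` are ordered as in `246135`. -/
abbrev Forms246135 (p : ℕ → ℕ) (a b c d e f : ℕ) : Prop :=
  p d < p a ∧ p a < p e ∧ p e < p b ∧ p b < p f ∧ p f < p c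

/-- `p` is a permutation of `{0, …, n - 1}` avoiding `2143`, `3142` and `246135`. -/
structure IsAvoider (n : ℕ) (p : ℕ → ℕ) : Prop extends IsPermOn n p where
  avoids_2143_3142 : ∀ i j k l, i < j → j < k → k < l → l < n → ¬ Forms2143Or3142 p i j k l
  avoids_246135 : ∀ a b c d e f, a < b → b < c → c < d → d < e → e < f → f < n →
    ¬ Forms246135 p a b c d e f

/-- The first `r` entries of `p` increase, and no pattern `2413` has its first two entries among
them and its last two after them. -/
structure SeparatedPrefix (r n : ℕ) (p : ℕ → ℕ) : Prop where
  le : r ≤ n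
  mono : ∀ i j, i < j → j < r → p i < p j
  sep : ∀ a b c d, a < r → b < r → r ≤ c → c < d → d < n → ¬ (p c < p a ∧ p a < p d ∧ p d < p b)

theorem IsAvoider.of_isOccurrence {n m : ℕ} {p q φ : ℕ → ℕ} (hp : IsAvoider n p)
    (hq : IsPermOn m q) (hφ : IsOccurrence φ m q n p) : IsAvoider m q where
  toIsPermOn := hq
  avoids_2143_3142 i j k l hij hjk hkl hl := by
    rw [Forms2143Or3142, hφ.lt_iff _ _ (by lia) (by lia), hφ.lt_iff _ _ (by lia) hl,
      hφ.lt_iff _ _ (by lia) (by lia), hφ.lt_iff _ _ hl (by lia)]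
    exact hp.avoids_2143_3142 _ _ _ _ (hφ.strictMono _ _ hij (by lia))
      (hφ.strictMono _ _ hjk (by lia)) (hφ.strictMono _ _ hkl hl) (hφ.lt _ hl)
  avoids_246135 a b c d e f hab hbc hcd hde hef hf := by
    rw [Forms246135, hφ.lt_iff _ _ (by lia) (by lia), hφ.lt_iff _ _ (by lia) (by lia),
      hφ.lt_iff _ _ (by lia) (by lia), hφ.lt_iff _ _ (by lia) hf, hφ.lt_iff _ _ hf (by lia)]
    exact hp.avoids_246135 _ _ _ _ _ _ (hφ.strictMono _ _ hab (by lia))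
      (hφ.strictMono _ _ hbc (by lia)) (hφ.strictMono _ _ hcd (by lia))
      (hφ.strictMono _ _ hde (by lia)) (hφ.strictMono _ _ hef hf) (hφ.lt _ hf)

theorem SeparatedPrefix.of_isOccurrence {n m r r' : ℕ} {p q φ : ℕ → ℕ}
    (hp : SeparatedPrefix r' n p) (hφ : IsOccurrence φ m q n p) (hr : r ≤ m)
    (hφr : ∀ i, i < m → (φ i < r' ↔ i < r)) : SeparatedPrefix r m q where
  le := hr
  mono i j hij hj := by
    rw [hφ.lt_iff _ _ (by lia) (by lia)]
    exact hp.mono _ _ (hφ.strictMono _ _ hij (by lia)) ((hφr j (by lia)).mpr hj)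
  sep a b c d ha hb hc hcd hd := by
    rw [hφ.lt_iff _ _ (by lia) (by lia), hφ.lt_iff _ _ (by lia) hd, hφ.lt_iff _ _ hd (by lia)]
    exact hp.sep _ _ _ _ ((hφr a (by lia)).mpr ha) ((hφr b (by lia)).mpr hb)
      (by have := hφr c (by lia); lia) (hφ.strictMono _ _ hcd hd) (hφ.lt _ hd)

/-- The permutation obtained from a permutation `σ` of length `m` by inserting the value `v` at the
position `s`. -/
def insertPoint (s v m : ℕ) (σ : ℕ → ℕ) (i : ℕ) : ℕ := insertBlock s v 1 m (fun _ => 0) σ i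

/-- The map sending the interval `[s, s + k)` to `s` and its complement increasingly onto the
complement of `s`. -/
def collapse (s k i : ℕ) : ℕ := if i < s then i else if i < s + k then s else i - k + 1

section Insertion

variable {s v k m i j : ℕ} {H σ p : ℕ → ℕ}

theorem isPermOn_zero : IsPermOn 1 fun _ => 0 where
  lt _ _ := Nat.one_pos
  inj i j hi hj _ := by lia
  eq_zero _ _ := rfl

theorem isPermOn_insertPoint (hs : s ≤ m) (hv : v ≤ m) (hσ : IsPermOn m σ) :
    IsPermOn (m + 1) (insertPoint s v m σ) :=
  isPermOn_insertBlock hs hv isPermOn_zero hσ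

theorem insertPoint_self : insertPoint s v m σ s = v := by
  simp [insertPoint, insertBlock]

theorem isOccurrence_insertPoint (hs : s ≤ m) :
    IsOccurrence (skip s 1) m σ (m + 1) (insertPoint s v m σ) :=
  isOccurrence_insertBlock_skip (H := fun _ => 0) hs

theorem exists_eq_skip (h : i ≠ s) : ∃ j, skip s 1 j = i :=
  ⟨if i < s then i else i - 1, by grind [skip]⟩

theorem isAvoider_insertPoint (hs : s ≤ m) (hv : v ≤ m) (hσ : IsAvoider m σ)
    (h_four : ∀ i j k l, i < j → j < k → k < l → l < m + 1 → i = s ∨ j = s ∨ k = s ∨ l = s →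
      ¬ Forms2143Or3142 (insertPoint s v m σ) i j k l)
    (h_six : ∀ a b c d e f, a < b → b < c → c < d → d < e → e < f → f < m + 1 →
      a = s ∨ b = s ∨ c = s ∨ d = s ∨ e = s ∨ f = s →
      ¬ Forms246135 (insertPoint s v m σ) a b c d e f) :
    IsAvoider (m + 1) (insertPoint s v m σ) where
  toIsPermOn := isPermOn_insertPoint hs hv hσ.toIsPermOn
  avoids_2143_3142 i j k l hij hjk hkl hl h := by
    by_cases hs' : i = s ∨ j = s ∨ k = s ∨ l = s
    · exact h_four i j k l hij hjk hkl hl hs' h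
    have hocc := (isOccurrence_insertPoint (v := v) (σ := σ) hs).lt_iff
    push Not at hs'
    obtain ⟨hi, hj, hk, hl'⟩ := hs'
    obtain ⟨i, rfl⟩ := exists_eq_skip hi
    obtain ⟨j, rfl⟩ := exists_eq_skip hj
    obtain ⟨k, rfl⟩ := exists_eq_skip hk
    obtain ⟨l, rfl⟩ := exists_eq_skip hl'
    rw [skip_lt_skip_iff] at hij hjk hkl
    rw [skip_lt_add_iff hs] at hl
    exact hσ.avoids_2143_3142 i j k l hij hjk hkl hl (by grind)
  avoids_246135 a b c d e f hab hbc hcd hde hef hf h := by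
    by_cases hs' : a = s ∨ b = s ∨ c = s ∨ d = s ∨ e = s ∨ f = s
    · exact h_six a b c d e f hab hbc hcd hde hef hf hs' h
    have hocc := (isOccurrence_insertPoint (v := v) (σ := σ) hs).lt_iff
    push Not at hs'
    obtain ⟨ha, hb, hc, hd, he, hf'⟩ := hs'
    obtain ⟨a, rfl⟩ := exists_eq_skip ha
    obtain ⟨b, rfl⟩ := exists_eq_skip hb
    obtain ⟨c, rfl⟩ := exists_eq_skip hc
    obtain ⟨d, rfl⟩ := exists_eq_skip hd
    obtain ⟨e, rfl⟩ := exists_eq_skip he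
    obtain ⟨f, rfl⟩ := exists_eq_skip hf'
    rw [skip_lt_skip_iff] at hab hbc hcd hde hef
    rw [skip_lt_add_iff hs] at hf
    exact hσ.avoids_246135 a b c d e f hab hbc hcd hde hef hf (by grind)

theorem mem_block_iff (hH : IsPermOn k H) (hi : i < m + k) :
    v ≤ insertBlock s v k m H σ i ∧ insertBlock s v k m H σ i < v + k ↔ s ≤ i ∧ i < s + k := by
  have := hH.lt (i - s)
  grind [insertBlock, skip]

theorem collapse_add (hi : i < k) : collapse s k (s + i) = s := by
  simp [collapse, hi]

theorem collapse_skip : collapse s k (skip s k i) = skip s 1 i := by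
  grind [collapse, skip]

theorem insertPoint_collapse (hs : s ≤ m) (hH : IsPermOn k H) (hi : i < m + k) :
    insertPoint s v m σ (collapse s k i) = collapse v k (insertBlock s v k m H σ i) := by
  obtain ⟨j, hj, rfl⟩ | ⟨j, rfl⟩ := exists_add_or_skip s k i
  · rw [collapse_add hj, insertBlock_add hj, collapse_add (hH.lt j hj), insertPoint_self]
  · have hj := (skip_lt_add_iff hs).mp hi
    rw [collapse_skip, insertBlock_skip hj, collapse_skip, insertPoint, insertBlock_skip hj]

theorem collapse_lt_collapse_iff :
    collapse s k i < collapse s k j ↔ i < j ∧ ¬ (s ≤ i ∧ j < s + k) := by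
  grind [collapse]

theorem collapse_lt (hs : s ≤ m) (hi : i < m + k) : collapse s k i < m + 1 := by
  grind [collapse]

/-- `p` is obtained from `q` by inflating the entry `v` at the position `s` to a block of length `k`
ordered like `H`. -/
structure IsInflation (s v k m : ℕ) (H q p : ℕ → ℕ) : Prop where
  mem_iff : ∀ i, i < m + k → (v ≤ p i ∧ p i < v + k ↔ s ≤ i ∧ i < s + k)
  eq_add : ∀ i, i < k → p (s + i) = v + H i
  collapse_eq : ∀ i, i < m + k → q (collapse s k i) = collapse v k (p i)

theorem isInflation_insertBlock (hs : s ≤ m) (hH : IsPermOn k H) :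
    IsInflation s v k m H (insertPoint s v m σ) (insertBlock s v k m H σ) where
  mem_iff _ hi := mem_block_iff hH hi
  eq_add _ hi := insertBlock_add hi
  collapse_eq _ hi := insertPoint_collapse hs hH hi

theorem IsInflation.avoids_2143_3142 {q : ℕ → ℕ} (hp : IsInflation s v k m H q p) (hs : s ≤ m)
    (hq : IsAvoider (m + 1) q) (hH : IsAvoider k H)
    (northeast : ∀ i j, s + k ≤ i → i < j → j < m + k → v + k ≤ p j → p i < p j)
    (southwest : ∀ i j, i < j → j < s → p i < v → p i < p j) (a b c d : ℕ) (hab : a < b)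
    (hbc : b < c) (hcd : c < d) (hd : d < m + k) : ¬ Forms2143Or3142 p a b c d := by
  intro h
  have ha := hp.mem_iff a (by lia)
  have hb := hp.mem_iff b (by lia)
  have hc := hp.mem_iff c (by lia)
  have hd' := hp.mem_iff d hd
  have hNE := northeast c d
  have hSW := southwest a b
  by_cases inside : s ≤ a ∧ d < s + k
  · obtain ⟨a, rfl⟩ := Nat.exists_eq_add_of_le inside.1
    obtain ⟨b, rfl⟩ := Nat.exists_eq_add_of_le (by lia : s ≤ b)
    obtain ⟨c, rfl⟩ := Nat.exists_eq_add_of_le (by lia : s ≤ c)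
    obtain ⟨d, rfl⟩ := Nat.exists_eq_add_of_le (by lia : s ≤ d)
    have := hH.avoids_2143_3142 a b c d
    rw [Forms2143Or3142, hp.eq_add a (by lia), hp.eq_add b (by lia), hp.eq_add c (by lia),
      hp.eq_add d (by lia)] at h
    lia
  · refine hq.avoids_2143_3142 (collapse s k a) (collapse s k b) (collapse s k c)
      (collapse s k d) ?_ ?_ ?_ (collapse_lt hs hd) ?_
    iterate 3 exact collapse_lt_collapse_iff.mpr (by lia)
    simp only [Forms2143Or3142, hp.collapse_eq a (by lia), hp.collapse_eq b (by lia),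
      hp.collapse_eq c (by lia), hp.collapse_eq d hd, collapse_lt_collapse_iff]
    refine ⟨?_, ?_, ?_, ?_⟩ <;> lia

theorem IsInflation.avoids_246135 {q : ℕ → ℕ} (hp : IsInflation s v k m H q p) (hs : s ≤ m)
    (hq : IsAvoider (m + 1) q) (hH : IsAvoider k H) (a b c d e f : ℕ) (hab : a < b) (hbc : b < c)
    (hcd : c < d) (hde : d < e) (hef : e < f) (hf : f < m + k) : ¬ Forms246135 p a b c d e f := by
  intro h
  have ha := hp.mem_iff a (by lia)
  have hb := hp.mem_iff b (by lia)
  have hc := hp.mem_iff c (by lia)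
  have hd := hp.mem_iff d (by lia)
  have he := hp.mem_iff e (by lia)
  have hf' := hp.mem_iff f hf
  by_cases inside : s ≤ a ∧ f < s + k
  · obtain ⟨a, rfl⟩ := Nat.exists_eq_add_of_le inside.1
    obtain ⟨b, rfl⟩ := Nat.exists_eq_add_of_le (by lia : s ≤ b)
    obtain ⟨c, rfl⟩ := Nat.exists_eq_add_of_le (by lia : s ≤ c)
    obtain ⟨d, rfl⟩ := Nat.exists_eq_add_of_le (by lia : s ≤ d)
    obtain ⟨e, rfl⟩ := Nat.exists_eq_add_of_le (by lia : s ≤ e)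
    obtain ⟨f, rfl⟩ := Nat.exists_eq_add_of_le (by lia : s ≤ f)
    have := hH.avoids_246135 a b c d e f
    rw [Forms246135, hp.eq_add a (by lia), hp.eq_add b (by lia), hp.eq_add c (by lia),
      hp.eq_add d (by lia), hp.eq_add e (by lia), hp.eq_add f (by lia)] at h
    lia
  · refine hq.avoids_246135 (collapse s k a) (collapse s k b) (collapse s k c)
      (collapse s k d) (collapse s k e) (collapse s k f) ?_ ?_ ?_ ?_ ?_ (collapse_lt hs hf) ?_
    iterate 5 exact collapse_lt_collapse_iff.mpr (by omega)
    simp only [Forms246135, hp.collapse_eq a (by lia), hp.collapse_eq b (by lia),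
      hp.collapse_eq c (by lia), hp.collapse_eq d (by lia), hp.collapse_eq e (by lia),
      hp.collapse_eq f hf, collapse_lt_collapse_iff]
    refine ⟨?_, ?_, ?_, ?_, ?_⟩ <;> omega

theorem isAvoider_insertBlock (hs : s ≤ m) (hv : v ≤ m) (hH : IsAvoider k H) (hσ : IsPermOn m σ)
    (hpoint : IsAvoider (m + 1) (insertPoint s v m σ))
    (northeast : ∀ i j, s ≤ i → i < j → j < m → v ≤ σ j → σ i < σ j)
    (southwest : ∀ i j, i < j → j < s → σ i < v → σ i < σ j) :
    IsAvoider (m + k) (insertBlock s v k m H σ) := by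
  have hp : IsInflation s v k m H (insertPoint s v m σ) (insertBlock s v k m H σ) :=
    isInflation_insertBlock hs hH.toIsPermOn
  refine ⟨isPermOn_insertBlock hs hv hH.toIsPermOn hσ,
    hp.avoids_2143_3142 hs hpoint hH ?_ ?_, hp.avoids_246135 hs hpoint hH⟩
  · intro i j hi hij hj hv'
    have := northeast (i - k) (j - k) (by lia) (by lia) (by lia)
    grind [insertBlock, skip]
  · intro i j hij hj hv'
    have := southwest i j hij hj
    grind [insertBlock, skip]

end Insertion

section SpecialInsertions

variable {n r s v k m z : ℕ} {H σ p : ℕ → ℕ}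

theorem IsPermOn.pos_of_ne (hσ : IsPermOn m σ) (hz : z < m) (h0 : σ z = 0) {i : ℕ} (hi : i < m)
    (hne : i ≠ z) : 0 < σ i :=
  Nat.pos_of_ne_zero fun h => hne (hσ.inj i z hi hz (h.trans h0.symm))

theorem isAvoider_insertPoint_zero_zero (hσ : IsAvoider n σ) :
    IsAvoider (n + 1) (insertPoint 0 0 n σ) := by
  have h0 : insertPoint 0 0 n σ 0 = 0 := insertPoint_self
  refine isAvoider_insertPoint n.zero_le n.zero_le hσ (fun i j k l hij hjk _ _ hs h => ?_)
    fun a b c d e f hab hbc hcd _ _ _ hs h => ?_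
  · obtain rfl : i = 0 := by lia
    lia
  · obtain rfl : a = 0 := by lia
    lia

theorem isAvoider_insertPoint_last (hv : v = 0 ∨ v = n) (hσ : IsAvoider n σ) :
    IsAvoider (n + 1) (insertPoint n v n σ) := by
  have hlast : insertPoint n v n σ n = v := insertPoint_self
  have hle : v ≤ n := by lia
  have hlt := (isPermOn_insertPoint le_rfl hle hσ.toIsPermOn).lt
  refine isAvoider_insertPoint le_rfl hle hσ (fun i j k l hij hjk hkl hl hs h => ?_)
    fun a b c d e f hab hbc hcd hde hef hf hs h => ?_
  · have := hlt k (by lia)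
    obtain rfl : l = n := by lia
    lia
  · have := hlt c (by lia)
    obtain rfl : f = n := by lia
    lia

theorem isAvoider_insertPoint_top (hσ : IsAvoider m σ) (hpre : SeparatedPrefix s m σ) :
    IsAvoider (m + 1) (insertPoint s m m σ) := by
  have hs : insertPoint s m m σ s = m := insertPoint_self
  have hocc := isOccurrence_insertPoint (v := m) (σ := σ) hpre.le
  have hlt := (isPermOn_insertPoint hpre.le le_rfl hσ.toIsPermOn).lt
  refine isAvoider_insertPoint hpre.le le_rfl hσ (fun i j k l hij hjk hkl hl hs h => ?_)
    fun a b c d e f hab hbc hcd hde hef hf hs h => ?_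
  · obtain rfl : k = s := by
      have := hlt k (by lia)
      lia
    have := hpre.mono i j hij hjk
    have := hpre.le
    have := hocc.lt_iff i j
    grind [skip]
  · obtain rfl : c = s := by
      have := hlt c (by lia)
      have := hlt b (by lia)
      lia
    have := hpre.sep a b (d - 1) (e - 1)
    have := hocc.lt_iff (d - 1) a
    have := hocc.lt_iff a (e - 1)
    have := hocc.lt_iff (e - 1) b
    grind [skip]

theorem isAvoider_insertPoint_above_zero (hσ : IsAvoider m σ) (hz : z < m) (h0 : σ z = 0)
    (hmono : ∀ i j, z < i → i < j → j < m → σ i < σ j) :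
    IsAvoider (m + 1) (insertPoint (z + 1) 1 m σ) := by
  have h1 : insertPoint (z + 1) 1 m σ (z + 1) = 1 := insertPoint_self
  have hocc := isOccurrence_insertPoint (v := 1) (σ := σ) (Nat.succ_le_of_lt hz)
  have hperm := isPermOn_insertPoint (Nat.succ_le_of_lt hz) (Nat.one_le_of_lt hz) hσ.toIsPermOn
  have h0' : insertPoint (z + 1) 1 m σ z = 0 := by
    simp [insertPoint, insertBlock, skip, h0]
  have hpos : ∀ i, i < m + 1 → i ≠ z → 0 < insertPoint (z + 1) 1 m σ i := fun i hi hne =>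
    hperm.pos_of_ne (hz.trans m.lt_succ_self) h0' hi hne
  refine isAvoider_insertPoint hz (Nat.one_le_of_lt hz) hσ
    (fun i j k l hij hjk hkl hl hs h => ?_)
    fun a b c d e f hab hbc hcd hde hef hf hs h => ?_
  · have := hpos i (by lia)
    have := hpos j (by lia)
    have := hmono (k - 1) (l - 1)
    have := hocc.lt_iff (k - 1) (l - 1)
    grind [skip]
  · have := hpos a (by lia)
    have := hpos c (by lia)
    obtain rfl : d = z + 1 := by
      have hd := hpos d (by lia)
      lia
    have := hσ.avoids_246135 a b c z (e - 1) (f - 1)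
    have := hocc.lt_iff z a
    have := hocc.lt_iff a (e - 1)
    have := hocc.lt_iff (e - 1) b
    have := hocc.lt_iff b (f - 1)
    have := hocc.lt_iff (f - 1) c
    grind [skip]

theorem isAvoider_insertBlock_top (hH : IsAvoider k H) (hσ : IsAvoider m σ)
    (hpre : SeparatedPrefix s m σ) : IsAvoider (m + k) (insertBlock s m k m H σ) :=
  isAvoider_insertBlock hpre.le le_rfl hH hσ.toIsPermOn (isAvoider_insertPoint_top hσ hpre)
    (fun _ j _ _ hj hle => absurd (hσ.lt j hj) hle.not_gt) fun i j hij hj _ => hpre.mono i j hij hj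

theorem isAvoider_insertBlock_above_zero (hH : IsAvoider k H) (hσ : IsAvoider m σ) (hz : z < m)
    (h0 : σ z = 0) (hmono : ∀ i j, z < i → i < j → j < m → σ i < σ j) :
    IsAvoider (m + k) (insertBlock (z + 1) 1 k m H σ) := by
  refine isAvoider_insertBlock hz (Nat.one_le_of_lt hz) hH hσ.toIsPermOn
    (isAvoider_insertPoint_above_zero hσ hz h0 hmono)
    (fun i j hi hij hj _ => hmono i j hi hij hj) fun i j hij hj hi => ?_
  have := hσ.toIsPermOn.pos_of_ne hz h0 (i := i)
  lia

theorem separatedPrefix_insertPoint_zero_zero (hpre : SeparatedPrefix r n σ) :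
    SeparatedPrefix (r + 1) (n + 1) (insertPoint 0 0 n σ) where
  le := Nat.succ_le_succ hpre.le
  mono i j hij hj := by
    have := hpre.mono (i - 1) (j - 1)
    have := hpre.le
    grind [insertPoint, insertBlock, skip]
  sep a b c d ha hb hc hcd hd := by
    have := hpre.sep (a - 1) (b - 1) (c - 1) (d - 1)
    have := hpre.le
    grind [insertPoint, insertBlock, skip]

theorem separatedPrefix_insertPoint_last (hv : v = 0 ∨ v = n) (hσ : IsPermOn n σ)
    (hpre : SeparatedPrefix r n σ) : SeparatedPrefix r (n + 1) (insertPoint n v n σ) where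
  le := hpre.le.trans n.le_succ
  mono i j hij hj := by
    have := hpre.mono i j
    have := hpre.le
    grind [insertPoint, insertBlock, skip]
  sep a b c d ha hb hc hcd hd := by
    have := hpre.sep a b c d ha hb hc hcd
    have := hpre.le
    have := hσ.lt b
    grind [insertPoint, insertBlock, skip]

theorem separatedPrefix_insertBlock_top (hσ : IsPermOn m σ) (hpre : SeparatedPrefix r m σ) :
    SeparatedPrefix r (m + k) (insertBlock r m k m H σ) where
  le := hpre.le.trans (m.le_add_right k)
  mono i j hij hj := by
    have := hpre.mono i j hij hj
    grind [insertBlock, skip]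
  sep a b c d ha hb hc hcd hd := by
    have := hpre.sep a b (c - k) (d - k) ha hb
    have := hpre.le
    have := hσ.lt a
    have := hσ.lt b
    grind [insertBlock, skip]

theorem separatedPrefix_insertBlock_zero_top (hσ : IsPermOn m σ) (hpre : SeparatedPrefix r k H) :
    SeparatedPrefix r (m + k) (insertBlock 0 m k m H σ) where
  le := hpre.le.trans (k.le_add_left m)
  mono i j hij hj := by
    have := hpre.mono i j hij hj
    have := hpre.le
    grind [insertBlock]
  sep a b c d ha hb hc hcd hd := by
    have := hpre.sep a b c d ha hb hc hcd
    have := hpre.le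
    have := hσ.lt (d - k)
    grind [insertBlock, skip]

theorem separatedPrefix_insertBlock_above_zero (hσ : IsPermOn m σ) (hz : z < m) (h0 : σ z = 0)
    (hrz : r ≤ z) (hH : IsPermOn k H) (hpre : SeparatedPrefix r m σ) :
    SeparatedPrefix r (m + k) (insertBlock (z + 1) 1 k m H σ) where
  le := hpre.le.trans (m.le_add_right k)
  mono i j hij hj := by
    have := hpre.mono i j hij hj
    grind [insertBlock, skip]
  sep a b c d ha hb hc hcd hd := by
    have := hσ.pos_of_ne hz h0 (i := a)
    have := hpre.sep a b (if c ≤ z then c else if c < z + 1 + k then z else c - k)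
      (if d ≤ z then d else d - k) ha hb
    have := hH.lt (d - (z + 1))
    grind [insertBlock, skip]

/-- The entry `1` of the permutation `p` of length `n` stands to the left of the entry `0`. -/
def OneBeforeZero (n : ℕ) (p : ℕ → ℕ) : Prop :=
  ∃ i j, i < j ∧ j < n ∧ p i = 1 ∧ p j = 0

theorem oneBeforeZero_insertBlock_iff (hs : s ≤ m) (hv : 2 ≤ v) :
    OneBeforeZero (m + k) (insertBlock s v k m H σ) ↔ OneBeforeZero m σ := by
  constructor
  · rintro ⟨i, j, hij, hj, h1, h0⟩
    obtain ⟨i', hi', rfl⟩ | ⟨i, rfl⟩ := exists_add_or_skip s k i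
    · rw [insertBlock_add hi'] at h1
      lia
    obtain ⟨j', hj', rfl⟩ | ⟨j, rfl⟩ := exists_add_or_skip s k j
    · rw [insertBlock_add hj'] at h0
      lia
    have hij := skip_lt_skip_iff.mp hij
    have hj := (skip_lt_add_iff hs).mp hj
    rw [insertBlock_skip (hij.trans hj)] at h1
    rw [insertBlock_skip hj] at h0
    exact ⟨i, j, hij, hj, by grind [skip], by grind [skip]⟩
  · rintro ⟨i, j, hij, hj, h1, h0⟩
    refine ⟨skip s k i, skip s k j, skip_lt_skip_iff.mpr hij, (skip_lt_add_iff hs).mpr hj, ?_, ?_⟩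
    · rw [insertBlock_skip (hij.trans hj), h1, skip, if_pos (by lia)]
    · rw [insertBlock_skip hj, h0, skip, if_pos (by lia)]

theorem OneBeforeZero.lt_of_isAvoider (h : OneBeforeZero m σ) (hσ : IsAvoider m σ) (hz : z < m)
    (h0 : σ z = 0) {i j : ℕ} (hi : z < i) (hij : i < j) (hj : j < m) : σ i < σ j := by
  obtain ⟨x, y, hxy, hy, hx1, hy0⟩ := h
  obtain rfl : y = z := hσ.inj y z hy hz (hy0.trans h0.symm)
  have := hσ.toIsPermOn.pos_of_ne hz h0 (i := i)
  have := hσ.toIsPermOn.pos_of_ne hz h0 (i := j)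
  have := hσ.inj x i
  have := hσ.inj i j
  have := hσ.avoids_2143_3142 x y i j hxy hi hij hj
  lia

theorem insertBlock_top_last (hs : s < m) (hσ : IsPermOn m σ) :
    insertBlock s m k m H σ (m + k - 1) = σ (m - 1) := by
  have := hσ.lt (m - 1)
  grind [insertBlock, skip]

theorem insertBlock_of_lt {i : ℕ} (hi : i < s) (hv : σ i < v) :
    insertBlock s v k m H σ i = σ i := by
  simp [insertBlock, skip, hi, hv]

theorem insertBlock_top_injective {k' m' : ℕ} {H' σ' : ℕ → ℕ} (hmk : m + k = m' + k')
    (hH : IsPermOn k H) (hσ : IsPermOn m σ) (hH' : IsPermOn k' H') (hσ' : IsPermOn m' σ')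
    (hs : s < m) (hs' : s < m') (hle : σ s ≤ σ (m - 1)) (hle' : σ' s ≤ σ' (m' - 1))
    (h : insertBlock s m k m H σ = insertBlock s m' k' m' H' σ') : k = k' ∧ H = H' ∧ σ = σ' := by
  have hlast : σ (m - 1) = σ' (m' - 1) := by
    rw [← insertBlock_top_last (k := k) (H := H) hs hσ,
      ← insertBlock_top_last (k := k') (H := H') hs' hσ', h, hmk]
  have hk : k = k' := by
    have := hσ.lt (m - 1)
    have := hσ'.lt (m' - 1)
    have := congrFun h (s + k)
    have := congrFun h (s + k')
    grind [insertBlock, skip]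
  obtain rfl : m = m' := by lia
  subst hk
  exact ⟨rfl, insertBlock_injective hH hH' hσ hσ' h⟩

/-- The block consists of the maximal run, starting at `s`, of entries exceeding the last one. -/
theorem IsAvoider.exists_eq_insertBlock_top (hp : IsAvoider n p) (hs : s < n)
    (hlow : ∀ i, i < s → p i < p (n - 1)) :
    ∃ k m H σ, m + k = n ∧ s < m ∧ IsAvoider k H ∧ IsAvoider m σ ∧ σ s ≤ σ (m - 1) ∧
      p = insertBlock s m k m H σ := by
  have hex : ∃ k, p (s + k) ≤ p (n - 1) := ⟨n - 1 - s, by rw [Nat.add_sub_cancel' (by lia)]⟩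
  obtain ⟨k, hk, hrun⟩ := Nat.findX hex
  have hkn : s + k < n := by
    have := hrun (n - 1 - s)
    grind
  obtain ⟨m, rfl⟩ : ∃ m, n = m + k := ⟨n - k, by lia⟩
  have hsm : s ≤ m := by lia
  have hblock : ∀ i, i < k → m ≤ p (s + i) ∧ p (s + i) < m + k := by
    intro i hi
    refine ⟨?_, hp.lt _ (by lia)⟩
    have hcard := hp.sub_card_le (I := Finset.Ico s (s + k)) (i := s + i)
      (fun j hj => by grind) fun j hj hjI => ?_
    · rwa [Nat.card_Ico, Nat.add_sub_cancel_left, Nat.add_sub_cancel] at hcard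
    have := hrun i hi
    have := hlow j
    have := hp.inj (s + i) j
    have := hp.inj (s + k) (m + k - 1)
    have := hp.avoids_2143_3142 (s + i) (s + k) j (m + k - 1)
    grind
  obtain ⟨H, σ, hH, hσ, rfl⟩ := hp.toIsPermOn.exists_eq_insertBlock hsm le_rfl hblock
  have hsm' : s < m := by lia
  refine ⟨k, m, H, σ, rfl, hsm', hp.of_isOccurrence hH (isOccurrence_insertBlock_add hsm),
    hp.of_isOccurrence hσ (isOccurrence_insertBlock_skip hsm), ?_, rfl⟩
  have := hσ.lt s hsm'
  rw [insertBlock_top_last hsm' hσ] at hk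
  grind [insertBlock, skip]

theorem insertBlock_above_zero_injective {k' m' z' : ℕ} {H' σ' : ℕ → ℕ} (hmk : m + k = m' + k')
    (hH : IsPermOn k H) (hσ : IsPermOn m σ) (hH' : IsPermOn k' H') (hσ' : IsPermOn m' σ')
    (hz : z < m) (h0 : σ z = 0) (h1 : ∃ i, i < z ∧ σ i = 1)
    (hz' : z' < m') (h0' : σ' z' = 0) (h1' : ∃ i, i < z' ∧ σ' i = 1)
    (h : insertBlock (z + 1) 1 k m H σ = insertBlock (z' + 1) 1 k' m' H' σ') :
    k = k' ∧ H = H' ∧ σ = σ' := by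
  obtain rfl : z = z' := by
    have := (isPermOn_insertBlock hz (Nat.one_le_of_lt hz) hH hσ).inj z z'
    have := congrFun h z
    have := congrFun h z'
    grind [insertBlock, skip]
  have hk : k = k' := by
    obtain ⟨i, hi, h1⟩ := h1
    obtain ⟨j, hj, h1'⟩ := h1'
    have := congrFun h i
    have := congrFun h j
    have := hσ.pos_of_ne hz h0 (i := j)
    have := hσ'.pos_of_ne hz' h0' (i := i)
    grind [insertBlock, skip]
  obtain rfl : m = m' := by lia
  subst hk
  exact ⟨rfl, insertBlock_injective hH hH' hσ hσ' h⟩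

/-- The block consists of the maximal run, starting right after the entry `0`, of entries smaller
than all those before the entry `0`; `x` is the position of the smallest of the latter. -/
theorem IsAvoider.exists_block_above_zero (hp : IsAvoider n p) (hz : z < n) (hz0 : 0 < z)
    (h0 : p z = 0) :
    ∃ k x, z + k < n ∧ x < z ∧ (∀ i, i < k → 1 ≤ p (z + 1 + i) ∧ p (z + 1 + i) < 1 + k) ∧
      ∀ j, z + k < j → j < n → p x < p j := by
  obtain ⟨x, hx, hmin⟩ := Finset.exists_min_image (Finset.range z) p ⟨0, by simpa using hz0⟩
  simp only [Finset.mem_range] at hx hmin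
  have hpos := fun i => hp.toIsPermOn.pos_of_ne hz h0 (i := i)
  have hex : ∃ k, n ≤ z + 1 + k ∨ p x ≤ p (z + 1 + k) := ⟨n, by lia⟩
  obtain ⟨k, hk, hrun⟩ := Nat.findX hex
  have hkn : z + k < n := by
    have := hrun (k - 1)
    grind
  have hafter : ∀ j, z + k < j → j < n → p x < p j := by
    intro j hj hjn
    have := hpos x
    have := hp.inj x (z + 1 + k)
    have := hp.inj x j
    have := hp.avoids_2143_3142 x z (z + 1 + k) j
    grind
  refine ⟨k, x, hkn, hx, fun i hi => ⟨hpos _ (by lia) (by lia), ?_⟩, hafter⟩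
  have hcard := hp.lt_card (I := Finset.Icc z (z + k)) (i := z + 1 + i)
    (fun j hj => by grind) (by lia) fun j hj hjI => ?_
  · rw [Nat.card_Icc] at hcard
    lia
  have := hrun i hi
  have := hmin j
  have := hafter j
  grind

theorem IsAvoider.exists_eq_insertBlock_above_zero (hp : IsAvoider n p) (hz : z < n)
    (hz0 : 0 < z) (h0 : p z = 0) :
    ∃ k m H σ, m + k = n ∧ z < m ∧ IsAvoider k H ∧ IsAvoider m σ ∧ σ z = 0 ∧
      (∃ i, i < z ∧ σ i = 1) ∧ p = insertBlock (z + 1) 1 k m H σ := by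
  obtain ⟨k, x, hkn, hx, hblock, hafter⟩ := hp.exists_block_above_zero hz hz0 h0
  obtain ⟨m, rfl⟩ : ∃ m, n = m + k := ⟨n - k, by lia⟩
  have hzm : z < m := by lia
  obtain ⟨H, σ, hH, hσ, rfl⟩ := hp.toIsPermOn.exists_eq_insertBlock hzm (by lia) hblock
  have hocc := isOccurrence_insertBlock_skip (v := 1) (k := k) (H := H) (σ := σ) hzm
  have hσ0 : σ z = 0 := by grind [insertBlock, skip]
  refine ⟨k, m, H, σ, rfl, hzm, hp.of_isOccurrence hH (isOccurrence_insertBlock_add hzm),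
    hp.of_isOccurrence hσ hocc, hσ0, ?_, rfl⟩
  obtain ⟨i, hi, h1⟩ := hσ.surj (v := 1) (by lia)
  refine ⟨i, ?_, h1⟩
  by_contra hiz
  have hne : i ≠ z := by
    rintro rfl
    lia
  have hx0 := hσ.pos_of_ne hzm hσ0 (i := x) (by lia) (by lia)
  have hxi : σ x < σ i := by
    rw [hocc.lt_iff x i (by lia) hi, skip, skip, if_pos (by lia), if_neg (by lia)]
    exact hafter (i + k) (by lia) (by lia)
  lia

end SpecialInsertions

end Avoidance

section Counting

/-- The permutations of `{0, …, n - 1}` avoiding `2143`, `3142` and `246135` whose first `r`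
entries form a separated prefix. -/
def avoiders (r n : ℕ) : Set (ℕ → ℕ) := {p | IsAvoider n p ∧ SeparatedPrefix r n p}

/-- The members of `avoiders r n` in which `1` precedes `0`. -/
def oneZeroAvoiders (r n : ℕ) : Set (ℕ → ℕ) := {p ∈ avoiders r n | OneBeforeZero n p}

/-- The members of `oneZeroAvoiders r n` whose last entry exceeds the first one. -/
def risingAvoiders (r n : ℕ) : Set (ℕ → ℕ) := {p ∈ oneZeroAvoiders r n | p 0 < p (n - 1)}

/-- The members of `oneZeroAvoiders r n` whose last entry is nonzero and smaller than the first
one. -/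
def fallingAvoiders (r n : ℕ) : Set (ℕ → ℕ) :=
  {p ∈ oneZeroAvoiders r n | p (n - 1) ≠ 0 ∧ p (n - 1) < p 0}

/-- The members of `risingAvoiders r n` whose entry right after the separated prefix does not
exceed the last one. -/
def cappedAvoiders (r n : ℕ) : Set (ℕ → ℕ) := {p ∈ risingAvoiders r n | p r ≤ p (n - 1)}

section Membership

variable {r n : ℕ} {p : ℕ → ℕ}

theorem avoiders_finite (r n : ℕ) : (avoiders r n).Finite :=
  (IsPermOn.finite n).subset fun _ hp => hp.1.toIsPermOn

theorem oneZeroAvoiders_finite (r n : ℕ) : (oneZeroAvoiders r n).Finite :=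
  (avoiders_finite r n).subset fun _ hp => hp.1

theorem risingAvoiders_finite (r n : ℕ) : (risingAvoiders r n).Finite :=
  (oneZeroAvoiders_finite r n).subset fun _ hp => hp.1

theorem cappedAvoiders_finite (r n : ℕ) : (cappedAvoiders r n).Finite :=
  (risingAvoiders_finite r n).subset fun _ hp => hp.1

theorem separatedPrefix_zero (n : ℕ) (p : ℕ → ℕ) : SeparatedPrefix 0 n p where
  le := n.zero_le
  mono _ _ _ h := absurd h (Nat.not_lt_zero _)
  sep _ _ _ _ h := absurd h (Nat.not_lt_zero _)

theorem separatedPrefix_one (hn : 0 < n) (p : ℕ → ℕ) : SeparatedPrefix 1 n p where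
  le := hn
  mono i j hij hj := by lia
  sep a b c d ha hb _ _ _ h := by
    obtain rfl : a = b := by lia
    lia

theorem SeparatedPrefix.of_succ (h : SeparatedPrefix (r + 1) n p) : SeparatedPrefix r n p where
  le := Nat.le_of_succ_le h.le
  mono i j hij hj := h.mono i j hij (hj.trans r.lt_succ_self)
  sep a b c d ha hb hc hcd hd := by
    obtain rfl | hc := eq_or_lt_of_le hc
    · have := h.mono a r ha r.lt_succ_self
      lia
    · exact h.sep a b c d (by lia) (by lia) hc hcd hd

theorem exists_zero_of_mem_oneZeroAvoiders (hp : p ∈ oneZeroAvoiders r n) :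
    ∃ j, r ≤ j ∧ j < n ∧ p j = 0 ∧ ∃ i, i < j ∧ p i = 1 := by
  obtain ⟨⟨-, hpre⟩, i, j, hij, hj, h1, h0⟩ := hp
  refine ⟨j, ?_, hj, h0, i, hij, h1⟩
  have := hpre.mono i j hij
  lia

theorem succ_lt_of_mem_risingAvoiders (hp : p ∈ risingAvoiders r n) : r + 1 < n := by
  obtain ⟨j, hrj, hj, h0, -⟩ := exists_zero_of_mem_oneZeroAvoiders hp.1
  have hjn : j ≠ n - 1 := by
    rintro rfl
    exact absurd hp.2 (by lia)
  lia

theorem lt_last_of_mem_risingAvoiders (hp : p ∈ risingAvoiders r n) {i : ℕ} (hi : i < r) :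
    p i < p (n - 1) := by
  have hr := succ_lt_of_mem_risingAvoiders hp
  obtain ⟨j, hrj, hj, h0, -⟩ := exists_zero_of_mem_oneZeroAvoiders hp.1
  obtain ⟨⟨⟨hav, hpre⟩, -⟩, hrise⟩ := hp
  by_contra hle
  have := hav.inj i (n - 1)
  have := hav.toIsPermOn.pos_of_ne hj h0 (i := 0)
  have := hpre.sep 0 i j (n - 1)
  grind

theorem avoiders_zero_succ (n : ℕ) : avoiders 0 (n + 1) = avoiders 1 (n + 1) := by
  ext p
  exact and_congr_right fun _ =>
    iff_of_true (separatedPrefix_zero _ p) (separatedPrefix_one n.succ_pos p)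

theorem avoiders_zero_zero : avoiders 0 0 = {fun _ => 0} := by
  refine Set.eq_singleton_iff_unique_mem.mpr ⟨⟨⟨⟨?_, ?_, fun _ _ => rfl⟩, ?_, ?_⟩,
    separatedPrefix_zero 0 _⟩, fun p hp => funext fun i => hp.1.eq_zero i i.zero_le⟩ <;> lia

theorem avoiders_eq_empty (h : n < r) : avoiders r n = ∅ :=
  Set.eq_empty_of_forall_notMem fun _ hp => absurd hp.2.le h.not_ge

theorem oneZeroAvoiders_zero_eq_empty (r : ℕ) : oneZeroAvoiders r 0 = ∅ := by
  refine Set.eq_empty_of_forall_notMem ?_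
  rintro p ⟨-, i, j, -, hj, -⟩
  exact absurd hj j.not_lt_zero

theorem risingAvoiders_eq_empty (h : n ≤ r) : risingAvoiders r n = ∅ := by
  refine Set.eq_empty_of_forall_notMem fun p hp => ?_
  have := succ_lt_of_mem_risingAvoiders hp
  lia

end Membership

section Points

variable {r n s v : ℕ} {S T : Set (ℕ → ℕ)}

theorem insertPoint_injOn : Set.InjOn (insertPoint s v n) {σ | IsPermOn n σ} :=
  fun _ hσ _ hσ' h => (insertBlock_injective isPermOn_zero isPermOn_zero hσ hσ' h).2

theorem IsPermOn.exists_eq_insertPoint (hs : s ≤ n) (hv : v ≤ n) {p : ℕ → ℕ}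
    (hp : IsPermOn (n + 1) p) (hpv : p s = v) : ∃ σ, IsPermOn n σ ∧ p = insertPoint s v n σ := by
  obtain ⟨H, σ, hH, hσ, rfl⟩ := hp.exists_eq_insertBlock hs hv fun i hi => by
    obtain rfl : i = 0 := by lia
    exact ⟨hpv.ge, by lia⟩
  have hH0 : H = fun _ => 0 := hH.eq_of_eqOn isPermOn_zero fun i hi => by
    have := hH.lt i hi
    lia
  exact ⟨σ, hσ, by rw [hH0]; rfl⟩

theorem ncard_setOf_apply_eq (hs : s ≤ n) (hv : v ≤ n) (hS : ∀ σ ∈ S, IsPermOn n σ)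
    (hT : ∀ p ∈ T, IsPermOn (n + 1) p)
    (h : ∀ σ, IsPermOn n σ → (insertPoint s v n σ ∈ T ↔ σ ∈ S)) :
    {p ∈ T | p s = v}.ncard = S.ncard := by
  have himage : {p ∈ T | p s = v} = insertPoint s v n '' S := by
    ext p
    constructor
    · rintro ⟨hp, hpv⟩
      obtain ⟨σ, hσ, rfl⟩ := (hT p hp).exists_eq_insertPoint hs hv hpv
      exact ⟨σ, (h σ hσ).mp hp, rfl⟩
    · rintro ⟨σ, hσ, rfl⟩
      exact ⟨(h σ (hS σ hσ)).mpr hσ, insertPoint_self⟩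
  rw [himage, (insertPoint_injOn.mono hS).ncard_image]

theorem ncard_avoiders_first_zero (r n : ℕ) :
    {p ∈ avoiders (r + 1) (n + 1) | p 0 = 0}.ncard = (avoiders r n).ncard := by
  refine ncard_setOf_apply_eq n.zero_le n.zero_le (fun σ hσ => hσ.1.toIsPermOn)
    (fun p hp => hp.1.toIsPermOn) fun σ hσ => ?_
  have hocc := isOccurrence_insertPoint (v := 0) (σ := σ) n.zero_le
  exact ⟨fun ⟨hav, hpre⟩ => ⟨hav.of_isOccurrence hσ hocc,
      hpre.of_isOccurrence hocc (Nat.le_of_succ_le_succ hpre.le) fun i _ => by simp [skip]⟩,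
    fun ⟨hav, hpre⟩ =>
      ⟨isAvoider_insertPoint_zero_zero hav, separatedPrefix_insertPoint_zero_zero hpre⟩⟩

theorem insertPoint_last_mem_avoiders_iff {σ : ℕ → ℕ} (hv : v = 0 ∨ v = n) (hσ : IsPermOn n σ)
    (hr : r ≤ n) : insertPoint n v n σ ∈ avoiders r (n + 1) ↔ σ ∈ avoiders r n := by
  have hocc := isOccurrence_insertPoint (v := v) (σ := σ) n.le_refl
  constructor
  · rintro ⟨hav, hpre⟩
    exact ⟨hav.of_isOccurrence hσ hocc,
      hpre.of_isOccurrence hocc hr fun i hi => by simp [skip, hi]⟩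
  · rintro ⟨hav, hpre⟩
    exact ⟨isAvoider_insertPoint_last hv hav, separatedPrefix_insertPoint_last hv hσ hpre⟩

theorem ncard_oneZeroAvoiders_last_zero (r n : ℕ) :
    {p ∈ oneZeroAvoiders (r + 1) (n + 1) | p n = 0}.ncard = (avoiders (r + 1) n).ncard := by
  refine ncard_setOf_apply_eq le_rfl n.zero_le (fun σ hσ => hσ.1.toIsPermOn)
    (fun p hp => hp.1.1.toIsPermOn) fun σ hσ => ⟨fun hp => ?_, fun hmem => ?_⟩
  · obtain ⟨j, hrj, hj, -⟩ := exists_zero_of_mem_oneZeroAvoiders hp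
    exact (insertPoint_last_mem_avoiders_iff (.inl rfl) hσ (by lia)).mp hp.1
  · obtain ⟨i, hi, h0⟩ := hσ.surj (v := 0) (Nat.zero_lt_of_lt hmem.2.le)
    refine ⟨(insertPoint_last_mem_avoiders_iff (.inl rfl) hσ hmem.2.le).mpr hmem,
      i, n, hi, n.lt_succ_self, ?_, insertPoint_self⟩
    simp [insertPoint, insertBlock, skip, hi, h0]

theorem ncard_risingAvoiders_last_max (r n : ℕ) :
    {p ∈ risingAvoiders r (n + 1) | p n = n}.ncard = (oneZeroAvoiders r n).ncard := by
  refine ncard_setOf_apply_eq le_rfl le_rfl (fun σ hσ => hσ.1.1.toIsPermOn)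
    (fun p hp => hp.1.1.1.toIsPermOn) fun σ hσ => ⟨fun hp => ?_, fun hmem => ?_⟩
  · have hr := succ_lt_of_mem_risingAvoiders hp
    have hn : 2 ≤ n := by
      obtain ⟨j, -, hj, h0, i, hij, -⟩ := exists_zero_of_mem_oneZeroAvoiders hp.1
      have hlast : insertPoint n n n σ n = n := insertPoint_self
      have hjn : j ≠ n := by
        rintro rfl
        lia
      lia
    exact ⟨(insertPoint_last_mem_avoiders_iff (.inr rfl) hσ (by lia)).mp hp.1.1,
      (oneBeforeZero_insertBlock_iff le_rfl hn).mp hp.1.2⟩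
  · obtain ⟨j, -, hj, -, i, hij, -⟩ := exists_zero_of_mem_oneZeroAvoiders hmem
    refine ⟨⟨(insertPoint_last_mem_avoiders_iff (.inr rfl) hσ hmem.1.2.le).mpr hmem.1,
      (oneBeforeZero_insertBlock_iff le_rfl (by lia)).mpr hmem.2⟩, ?_⟩
    rw [Nat.add_sub_cancel, insertPoint_self, insertPoint,
      insertBlock_of_lt (by lia) (hσ.lt 0 (by lia))]
    exact hσ.lt 0 (by lia)

end Points

section Blocks

variable {r n : ℕ}

theorem ncard_eq_sum_of_decomposition {α : Type*} (n : ℕ) {S : Set α} {A B : ℕ → Set α}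
    (hA : ∀ k, (A k).Finite) (hB : ∀ k, (B k).Finite) (φ : ℕ → ℕ → α → α → α)
    (hmaps : ∀ k m a b, k + m = n → a ∈ A k → b ∈ B m → φ k m a b ∈ S)
    (hinj : ∀ k m a b k' m' a' b', k + m = n → a ∈ A k → b ∈ B m → k' + m' = n → a' ∈ A k' →
      b' ∈ B m' → φ k m a b = φ k' m' a' b' → k = k' ∧ a = a' ∧ b = b')
    (hsurj : ∀ s ∈ S, ∃ k m a b, k + m = n ∧ a ∈ A k ∧ b ∈ B m ∧ s = φ k m a b) :
    S.ncard = ∑ x ∈ Finset.HasAntidiagonal.antidiagonal n, (A x.1).ncard * (B x.2).ncard := by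
  classical
  let P := (Finset.HasAntidiagonal.antidiagonal n).sigma fun x =>
    (hA x.1).toFinset ×ˢ (hB x.2).toFinset
  let Φ : (Σ _ : ℕ × ℕ, α × α) → α := fun x => φ x.1.1 x.1.2 x.2.1 x.2.2
  have hmem : ∀ k m a b, (⟨(k, m), a, b⟩ : Σ _ : ℕ × ℕ, α × α) ∈ P ↔
      k + m = n ∧ a ∈ A k ∧ b ∈ B m := by
    simp [P]
  have himage : S = ↑(P.image Φ) := by
    ext s
    rw [Finset.coe_image]
    constructor
    · intro hs
      obtain ⟨k, m, a, b, h, ha, hb, rfl⟩ := hsurj s hs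
      exact ⟨⟨(k, m), a, b⟩, (hmem k m a b).mpr ⟨h, ha, hb⟩, rfl⟩
    · rintro ⟨⟨⟨k, m⟩, a, b⟩, hx, rfl⟩
      obtain ⟨h, ha, hb⟩ := (hmem k m a b).mp hx
      exact hmaps k m a b h ha hb
  have hinjOn : Set.InjOn Φ P := by
    rintro ⟨⟨k, m⟩, a, b⟩ hx ⟨⟨k', m'⟩, a', b'⟩ hx' heq
    obtain ⟨h, ha, hb⟩ := (hmem k m a b).mp hx
    obtain ⟨h', ha', hb'⟩ := (hmem k' m' a' b').mp hx'
    obtain ⟨rfl, rfl, rfl⟩ := hinj k m a b k' m' a' b' h ha hb h' ha' hb' heq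
    obtain rfl : m = m' := by lia
    rfl
  rw [himage, Set.ncard_coe_finset, Finset.card_image_of_injOn hinjOn, Finset.card_sigma]
  refine Finset.sum_congr rfl fun x _ => ?_
  rw [Finset.card_product, Set.ncard_eq_toFinset_card _ (hA x.1),
    Set.ncard_eq_toFinset_card _ (hB x.2)]

theorem ncard_risingAvoiders (r n : ℕ) :
    (risingAvoiders (r + 1) n).ncard = ∑ x ∈ Finset.HasAntidiagonal.antidiagonal n,
      (avoiders 0 x.1).ncard * (cappedAvoiders (r + 1) x.2).ncard := by
  refine ncard_eq_sum_of_decomposition n (avoiders_finite 0) (cappedAvoiders_finite (r + 1))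
    (fun k m H σ => insertBlock (r + 1) m k m H σ) ?_ ?_ ?_
  · rintro k m H σ rfl hH ⟨hσ, -⟩
    have hr := succ_lt_of_mem_risingAvoiders hσ
    obtain ⟨⟨⟨hav, hpre⟩, hone⟩, hrise⟩ := hσ
    rw [add_comm k m]
    refine ⟨⟨⟨isAvoider_insertBlock_top hH.1 hav hpre,
      separatedPrefix_insertBlock_top hav.toIsPermOn hpre⟩,
      (oneBeforeZero_insertBlock_iff hpre.le (by lia)).mpr hone⟩, ?_⟩
    rwa [insertBlock_top_last (by lia) hav.toIsPermOn,
      insertBlock_of_lt r.succ_pos (hav.lt 0 (by lia))]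
  · rintro k m H σ k' m' H' σ' hkm hH ⟨hσ, hcap⟩ hkm' hH' ⟨hσ', hcap'⟩ heq
    have hr := succ_lt_of_mem_risingAvoiders hσ
    have hr' := succ_lt_of_mem_risingAvoiders hσ'
    exact insertBlock_top_injective (by lia) hH.1.toIsPermOn hσ.1.1.1.toIsPermOn
      hH'.1.toIsPermOn hσ'.1.1.1.toIsPermOn (by lia) (by lia) hcap hcap' heq
  · intro p hp
    have hr := succ_lt_of_mem_risingAvoiders hp
    obtain ⟨k, m, H, σ, rfl, hrm, hH, hσ, hcap, rfl⟩ := hp.1.1.1.exists_eq_insertBlock_top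
      (s := r + 1) (by lia) fun i => lt_last_of_mem_risingAvoiders hp
    obtain ⟨⟨⟨-, hpre⟩, hone⟩, hrise⟩ := hp
    rw [insertBlock_top_last hrm hσ.toIsPermOn,
      insertBlock_of_lt r.succ_pos (hσ.lt 0 (by lia))] at hrise
    refine ⟨k, m, H, σ, k.add_comm m, ⟨hH, separatedPrefix_zero k H⟩,
      ⟨⟨⟨⟨hσ, hpre.of_isOccurrence (isOccurrence_insertBlock_skip hrm.le) hrm.le ?_⟩,
        (oneBeforeZero_insertBlock_iff hrm.le (by lia)).mp hone⟩, hrise⟩, hcap⟩, rfl⟩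
    intro i _
    grind [skip]

theorem ncard_fallingAvoiders (r n : ℕ) :
    (fallingAvoiders (r + 1) n).ncard = ∑ x ∈ Finset.HasAntidiagonal.antidiagonal n,
      (avoiders (r + 1) x.1).ncard * (risingAvoiders 1 x.2).ncard := by
  refine ncard_eq_sum_of_decomposition n (avoiders_finite (r + 1)) (risingAvoiders_finite 1)
    (fun k m H σ => insertBlock 0 m k m H σ) ?_ ?_ ?_
  · rintro k m H σ rfl hH hσ
    have hm := succ_lt_of_mem_risingAvoiders hσ
    have hk := hH.2.le
    obtain ⟨⟨⟨hav, -⟩, hone⟩, hrise⟩ := hσ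
    have h0 : insertBlock 0 m k m H σ 0 = m + H 0 := insertBlock_add (i := 0) (by lia)
    have hlast := hav.lt (m - 1) (by lia)
    rw [add_comm k m]
    refine ⟨⟨⟨isAvoider_insertBlock_top hH.1 hav (separatedPrefix_zero m σ),
      separatedPrefix_insertBlock_zero_top hav.toIsPermOn hH.2⟩,
      (oneBeforeZero_insertBlock_iff m.zero_le hm.le).mpr hone⟩, ?_⟩
    rw [insertBlock_top_last (by lia) hav.toIsPermOn]
    lia
  · rintro k m H σ k' m' H' σ' hkm hH hσ hkm' hH' hσ' heq
    have hm := succ_lt_of_mem_risingAvoiders hσ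
    have hm' := succ_lt_of_mem_risingAvoiders hσ'
    exact insertBlock_top_injective (by lia) hH.1.toIsPermOn hσ.1.1.1.toIsPermOn
      hH'.1.toIsPermOn hσ'.1.1.1.toIsPermOn (by lia) (by lia) hσ.2.le hσ'.2.le heq
  · rintro p ⟨⟨⟨hav, hpre⟩, hone⟩, hne, hfall⟩
    have hn : 0 < n := hpre.le.trans_lt' r.succ_pos
    obtain ⟨k, m, H, σ, rfl, hm, hH, hσ, hle, rfl⟩ :=
      hav.exists_eq_insertBlock_top hn fun i hi => absurd hi i.not_lt_zero
    rw [insertBlock_top_last hm hσ.toIsPermOn] at hne hfall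
    have hm2 : 2 ≤ m := by
      have := hσ.lt (m - 1) (by lia)
      lia
    have hrk : r + 1 ≤ k := by
      have := hpre.mono 0 k
      have := hσ.lt 0 hm
      grind [insertBlock, skip]
    refine ⟨k, m, H, σ, k.add_comm m, ⟨hH, hpre.of_isOccurrence
      (isOccurrence_insertBlock_add m.zero_le) hrk fun i _ => by rw [Nat.zero_add]⟩,
      ⟨⟨⟨hσ, separatedPrefix_one hm σ⟩, (oneBeforeZero_insertBlock_iff m.zero_le hm2).mp hone⟩,
        hle.lt_of_ne fun h => ?_⟩, rfl⟩
    have := hσ.inj 0 (m - 1) hm (by lia) h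
    lia

/-- The position of the entry `0` of a permutation. -/
noncomputable def zeroPos (p : ℕ → ℕ) : ℕ := sInf {i | p i = 0}

theorem IsPermOn.zeroPos_eq {p : ℕ → ℕ} (hp : IsPermOn n p) {z : ℕ} (hz : z < n) (h0 : p z = 0) :
    zeroPos p = z := by
  have hmem : p (zeroPos p) = 0 := Nat.sInf_mem (s := {i | p i = 0}) ⟨z, h0⟩
  exact hp.inj _ _ ((Nat.sInf_le (s := {i | p i = 0}) h0).trans_lt hz) hz (hmem.trans h0.symm)

theorem ncard_avoiders_first_ne_zero (r n : ℕ) :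
    {p ∈ avoiders (r + 1) n | p 0 ≠ 0}.ncard = ∑ x ∈ Finset.HasAntidiagonal.antidiagonal n,
      (avoiders 0 x.1).ncard * (oneZeroAvoiders (r + 1) x.2).ncard := by
  refine ncard_eq_sum_of_decomposition n (avoiders_finite 0) (oneZeroAvoiders_finite (r + 1))
    (fun k m H σ => insertBlock (zeroPos σ + 1) 1 k m H σ) ?_ ?_ ?_
  · rintro k m H σ rfl hH hσ
    obtain ⟨z, hrz, hz, h0, -⟩ := exists_zero_of_mem_oneZeroAvoiders hσ
    obtain ⟨⟨hav, hpre⟩, hone⟩ := hσ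
    have hpos := hav.toIsPermOn.pos_of_ne hz h0 (i := 0) (by lia) (by lia)
    rw [hav.toIsPermOn.zeroPos_eq hz h0, add_comm k m]
    refine ⟨⟨isAvoider_insertBlock_above_zero hH.1 hav hz h0 fun i j =>
      hone.lt_of_isAvoider hav hz h0, separatedPrefix_insertBlock_above_zero hav.toIsPermOn hz h0
        hrz hH.1.toIsPermOn hpre⟩, ?_⟩
    grind [insertBlock, skip]
  · rintro k m H σ k' m' H' σ' hkm hH hσ hkm' hH' hσ' heq
    obtain ⟨z, -, hz, h0, h1⟩ := exists_zero_of_mem_oneZeroAvoiders hσ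
    obtain ⟨z', -, hz', h0', h1'⟩ := exists_zero_of_mem_oneZeroAvoiders hσ'
    rw [hσ.1.1.toIsPermOn.zeroPos_eq hz h0, hσ'.1.1.toIsPermOn.zeroPos_eq hz' h0'] at heq
    exact insertBlock_above_zero_injective (by lia) hH.1.toIsPermOn hσ.1.1.toIsPermOn
      hH'.1.toIsPermOn hσ'.1.1.toIsPermOn hz h0 h1 hz' h0' h1' heq
  · rintro p ⟨⟨hav, hpre⟩, hp0⟩
    obtain ⟨z, hz, h0⟩ := hav.toIsPermOn.surj (v := 0) (hpre.le.trans_lt' r.succ_pos)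
    have hrz : r + 1 ≤ z := by
      have := hpre.mono 0 z
      grind
    obtain ⟨k, m, H, σ, rfl, hzm, hH, hσ, hσ0, ⟨i, hi, h1⟩, rfl⟩ :=
      hav.exists_eq_insertBlock_above_zero hz (by lia) h0
    refine ⟨k, m, H, σ, k.add_comm m, ⟨hH, separatedPrefix_zero k H⟩,
      ⟨⟨hσ, hpre.of_isOccurrence (isOccurrence_insertBlock_skip hzm) (by lia) fun j _ => ?_⟩,
        i, z, hi, hzm, h1, hσ0⟩, by rw [hσ.toIsPermOn.zeroPos_eq hzm hσ0]⟩
    grind [skip]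

end Blocks

section Capped

variable {r n : ℕ} {p : ℕ → ℕ}

/-- A pattern `2413` breaking the separation would, together with the maximum and the last entry,
form `2143` or `246135`. -/
theorem IsAvoider.separatedPrefix_of_lt_last (hp : IsAvoider n p)
    (hlow : ∀ i, i < r → p i < p (n - 1)) (hr : r < n) (hmax : p (n - 1) ≠ n - 1) :
    SeparatedPrefix r n p := by
  obtain ⟨h, hhn, hh⟩ := hp.surj (v := n - 1) (by lia)
  have hlast := hp.lt (n - 1) (by lia)
  have hhr : r ≤ h := by
    by_contra hlt
    have := hlow h (by lia)
    lia
  have hhn' : h < n - 1 := by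
    by_contra hle
    obtain rfl : h = n - 1 := by lia
    exact hmax hh
  have hmono : ∀ i j, i < j → j < r → p i < p j := by
    intro i j hij hj
    have := hlow i (by lia)
    have := hlow j hj
    have := hp.inj i j
    have := hp.avoids_2143_3142 i j h (n - 1)
    lia
  refine ⟨hr.le, hmono, fun a b c d ha hb hc hcd hd ⟨_, h2, h3⟩ => ?_⟩
  have hbl := hlow b hb
  have hdn : d ≠ n - 1 := by
    rintro rfl
    lia
  have hab : a < b := by
    have := hmono b a
    grind
  obtain hch | rfl | hch := lt_trichotomy c h
  · exact hp.avoids_2143_3142 a c h (n - 1) (by lia) hch hhn' (by lia) (by lia)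
  · lia
  · exact hp.avoids_246135 a b h c d (n - 1) hab (by lia) hch hcd (by lia) (by lia) (by lia)

theorem cappedAvoiders_last_ne_max (r n : ℕ) :
    {p ∈ cappedAvoiders (r + 1) n | p (n - 1) ≠ n - 1} =
      {p ∈ risingAvoiders (r + 2) n | p (n - 1) ≠ n - 1} := by
  ext p
  constructor
  · rintro ⟨⟨hp, hcap⟩, hmax⟩
    have hr := succ_lt_of_mem_risingAvoiders hp
    have hlow := fun i => lt_last_of_mem_risingAvoiders hp (i := i)
    obtain ⟨⟨⟨hav, -⟩, hone⟩, hrise⟩ := hp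
    refine ⟨⟨⟨⟨hav, hav.separatedPrefix_of_lt_last (fun i hi => ?_) hr hmax⟩, hone⟩, hrise⟩, hmax⟩
    have := hav.inj (r + 1) (n - 1)
    grind
  · rintro ⟨hp, hmax⟩
    exact ⟨⟨⟨⟨⟨hp.1.1.1, hp.1.1.2.of_succ⟩, hp.1.2⟩, hp.2⟩,
      (lt_last_of_mem_risingAvoiders hp (Nat.lt_succ_self _)).le⟩, hmax⟩

theorem cappedAvoiders_last_max (r n : ℕ) :
    {p ∈ cappedAvoiders r n | p (n - 1) = n - 1} =
      {p ∈ risingAvoiders r n | p (n - 1) = n - 1} := by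
  ext p
  refine ⟨fun hp => ⟨hp.1.1, hp.2⟩, fun hp => ⟨⟨hp.1, ?_⟩, hp.2⟩⟩
  have hr := succ_lt_of_mem_risingAvoiders hp.1
  have := hp.1.1.1.1.lt r (by lia)
  have := hp.2
  lia

end Capped

section Recurrences

open PowerSeries

variable {S A B : ℕ → Set (ℕ → ℕ)}

/-- The generating function of a sequence of finite sets. -/
noncomputable def ncardSeries (S : ℕ → Set (ℕ → ℕ)) : ℤ⟦X⟧ := mk fun n => ((S n).ncard : ℤ)

theorem ncardSeries_eq_add (h : ∀ n, (S n).ncard = (A n).ncard + (B n).ncard) :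
    ncardSeries S = ncardSeries A + ncardSeries B := by
  ext n
  simp only [ncardSeries, map_add, coeff_mk, h, Nat.cast_add]

theorem ncardSeries_eq_mul (h : ∀ n, (S n).ncard =
      ∑ x ∈ Finset.HasAntidiagonal.antidiagonal n, (A x.1).ncard * (B x.2).ncard) :
    ncardSeries S = ncardSeries A * ncardSeries B := by
  ext n
  simp only [ncardSeries, coeff_mul, coeff_mk, h, Nat.cast_sum, Nat.cast_mul]

theorem ncardSeries_eq_X_mul (h₀ : S 0 = ∅) (h : ∀ n, (S (n + 1)).ncard = (A n).ncard) :
    ncardSeries S = X * ncardSeries A := by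
  ext n
  cases n with
  | zero => simp [ncardSeries, h₀]
  | succ n => simp only [ncardSeries, coeff_succ_X_mul, coeff_mk, h]

theorem ncard_sep_add_ncard_sep_not {α : Type*} {s : Set α} (hs : s.Finite) (P : α → Prop) :
    {x ∈ s | P x}.ncard + {x ∈ s | ¬ P x}.ncard = s.ncard :=
  Set.ncard_inter_add_ncard_sdiff_eq_ncard s {x | P x} hs

theorem ncardSeries_avoiders_zero :
    ncardSeries (avoiders 0) = 1 + ncardSeries (avoiders 1) := by
  ext n
  cases n with
  | zero => simp [ncardSeries, avoiders_zero_zero, avoiders_eq_empty]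
  | succ n => simp [ncardSeries, avoiders_zero_succ, coeff_one]

theorem ncardSeries_avoiders_succ (r : ℕ) :
    ncardSeries (avoiders (r + 1)) =
      X * ncardSeries (avoiders r) +
        ncardSeries (avoiders 0) * ncardSeries (oneZeroAvoiders (r + 1)) := by
  rw [← ncardSeries_eq_mul (ncard_avoiders_first_ne_zero r),
    ← ncardSeries_eq_X_mul (S := fun n => {p ∈ avoiders (r + 1) n | p 0 = 0})
      (by simp [avoiders_eq_empty]) (ncard_avoiders_first_zero r)]
  exact ncardSeries_eq_add fun n => (ncard_sep_add_ncard_sep_not (avoiders_finite _ n) _).symm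

theorem ncard_oneZeroAvoiders_last_ne_zero (r n : ℕ) :
    {p ∈ oneZeroAvoiders r n | p (n - 1) ≠ 0}.ncard =
      (fallingAvoiders r n).ncard + (risingAvoiders r n).ncard := by
  have hfall : fallingAvoiders r n =
      {p ∈ {p ∈ oneZeroAvoiders r n | p (n - 1) ≠ 0} | p (n - 1) < p 0} := by
    ext p
    exact and_assoc.symm
  have hrise : risingAvoiders r n =
      {p ∈ {p ∈ oneZeroAvoiders r n | p (n - 1) ≠ 0} | ¬ p (n - 1) < p 0} := by
    ext p
    refine ⟨fun ⟨hp, h⟩ => ⟨⟨hp, by lia⟩, h.not_gt⟩, fun ⟨⟨hp, _⟩, h⟩ => ⟨hp, ?_⟩⟩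
    obtain ⟨j, -, hj, -, i, hij, -⟩ := exists_zero_of_mem_oneZeroAvoiders hp
    have := hp.1.1.inj 0 (n - 1)
    grind
  rw [hfall, hrise, ncard_sep_add_ncard_sep_not
    ((oneZeroAvoiders_finite r n).subset (Set.sep_subset _ _))]

theorem ncardSeries_oneZeroAvoiders (r : ℕ) :
    ncardSeries (oneZeroAvoiders (r + 1)) = X * ncardSeries (avoiders (r + 1)) +
      ncardSeries (avoiders (r + 1)) * ncardSeries (risingAvoiders 1) +
        ncardSeries (risingAvoiders (r + 1)) := by
  rw [← ncardSeries_eq_mul (ncard_fallingAvoiders r), add_assoc,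
    ← ncardSeries_eq_X_mul (S := fun n => {p ∈ oneZeroAvoiders (r + 1) n | p (n - 1) = 0})
      (by simp [oneZeroAvoiders_zero_eq_empty]) (ncard_oneZeroAvoiders_last_zero r),
    ← ncardSeries_eq_add (ncard_oneZeroAvoiders_last_ne_zero (r + 1))]
  exact ncardSeries_eq_add fun n =>
    (ncard_sep_add_ncard_sep_not (oneZeroAvoiders_finite _ n) _).symm

theorem ncardSeries_risingAvoiders_last_max (r : ℕ) :
    ncardSeries (fun n => {p ∈ risingAvoiders r n | p (n - 1) = n - 1}) =
      X * ncardSeries (oneZeroAvoiders r) :=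
  ncardSeries_eq_X_mul (by simp [risingAvoiders_eq_empty]) (ncard_risingAvoiders_last_max r)

theorem ncardSeries_risingAvoiders_eq_add (r : ℕ) :
    ncardSeries (risingAvoiders r) = X * ncardSeries (oneZeroAvoiders r) +
      ncardSeries fun n => {p ∈ risingAvoiders r n | p (n - 1) ≠ n - 1} := by
  rw [← ncardSeries_risingAvoiders_last_max]
  exact ncardSeries_eq_add fun n =>
    (ncard_sep_add_ncard_sep_not (risingAvoiders_finite r n) _).symm

theorem ncardSeries_cappedAvoiders (r : ℕ) :
    ncardSeries (cappedAvoiders (r + 1)) = ncardSeries (risingAvoiders (r + 2)) +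
      X * ncardSeries (oneZeroAvoiders (r + 1)) - X * ncardSeries (oneZeroAvoiders (r + 2)) := by
  have hsplit : ncardSeries (cappedAvoiders (r + 1)) = X * ncardSeries (oneZeroAvoiders (r + 1)) +
      ncardSeries fun n => {p ∈ risingAvoiders (r + 2) n | p (n - 1) ≠ n - 1} := by
    rw [← ncardSeries_risingAvoiders_last_max]
    refine ncardSeries_eq_add fun n => ?_
    rw [← cappedAvoiders_last_max, ← cappedAvoiders_last_ne_max]
    exact (ncard_sep_add_ncard_sep_not (cappedAvoiders_finite _ n) _).symm
  rw [hsplit, ncardSeries_risingAvoiders_eq_add (r + 2)]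
  ring

theorem X_pow_dvd_ncardSeries_risingAvoiders (r : ℕ) : X ^ r ∣ ncardSeries (risingAvoiders r) :=
  X_pow_dvd_iff.mpr fun n hn => by simp [ncardSeries, risingAvoiders_eq_empty hn.le]

theorem isPrefixSystem_ncardSeries : IsPrefixSystem (fun r => ncardSeries (avoiders r))
    (fun r => ncardSeries (oneZeroAvoiders r)) (fun r => ncardSeries (risingAvoiders r)) where
  eq_one_add := ncardSeries_avoiders_zero
  eq_succ := ncardSeries_avoiders_succ
  oneZero_eq := ncardSeries_oneZeroAvoiders
  rising_eq r := by
    rw [← ncardSeries_cappedAvoiders]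
    exact ncardSeries_eq_mul (ncard_risingAvoiders r)
  X_pow_dvd r := X_pow_dvd_ncardSeries_risingAvoiders (r + 1)

theorem ncard_avoiders_zero_succ_eq_schroederSum (n : ℕ) :
    (avoiders 0 (n + 1)).ncard = schroederSum n := by
  have h := congrArg (coeff (n + 1)) isPrefixSystem_ncardSeries.eq_one_add_X_mul_schroederSeries
  rw [map_add, coeff_one, if_neg n.succ_ne_zero, zero_add, coeff_succ_X_mul] at h
  simpa [ncardSeries, schroederSeries] using h

end Recurrences

end Counting

section Bridge

variable {n : ℕ} {π : Equiv.Perm (Fin n)}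

theorem contains_iff_of_rightInverse {k : ℕ} {σ : Equiv.Perm (Fin k)}
    {τ : Fin k → Fin k} (hτ : Function.RightInverse τ σ) :
    Contains π σ ↔ ∃ f : Fin k → Fin n, StrictMono f ∧ StrictMono (π ∘ f ∘ τ) := by
  have hτ' : ∀ a, τ (σ a) = a := fun a => σ.injective (hτ (σ a))
  refine exists_congr fun f => and_congr_right fun _ => ⟨fun h x y hxy => ?_, fun h a b => ?_⟩
  · exact (h (τ x) (τ y)).mp (by rwa [hτ x, hτ y])
  · simpa only [Function.comp_apply, hτ'] using (h.lt_iff_lt (a := σ a) (b := σ b)).symm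

theorem contains_p2143_iff : Contains π p2143 ↔
    ∃ i j k l, (i < j ∧ j < k ∧ k < l) ∧ π j < π i ∧ π i < π l ∧ π l < π k := by
  have hτ : Function.RightInverse ![1, 0, 3, 2] p2143 := fun x => by decide +revert
  rw [contains_iff_of_rightInverse hτ, ← FinVec.exists_iff]
  simp [FinVec.Exists, Fin.strictMono_iff_lt_succ, Fin.forall_fin_succ]

theorem contains_p3142_iff : Contains π p3142 ↔
    ∃ i j k l, (i < j ∧ j < k ∧ k < l) ∧ π j < π l ∧ π l < π i ∧ π i < π k := by
  have hτ : Function.RightInverse ![1, 3, 0, 2] p3142 := fun x => by decide +revert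
  rw [contains_iff_of_rightInverse hτ, ← FinVec.exists_iff]
  simp [FinVec.Exists, Fin.strictMono_iff_lt_succ, Fin.forall_fin_succ]

theorem contains_p246135_iff : Contains π p246135 ↔
    ∃ a b c d e f, (a < b ∧ b < c ∧ c < d ∧ d < e ∧ e < f) ∧
      π d < π a ∧ π a < π e ∧ π e < π b ∧ π b < π f ∧ π f < π c := by
  have hτ : Function.RightInverse ![3, 0, 4, 1, 5, 2] p246135 := fun x => by decide +revert
  rw [contains_iff_of_rightInverse hτ, ← FinVec.exists_iff]
  simp [FinVec.Exists, Fin.strictMono_iff_lt_succ, Fin.forall_fin_succ]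

/-- A permutation of `Fin n` as a function on `ℕ`, extended by zero. -/
def permFun (π : Equiv.Perm (Fin n)) (i : ℕ) : ℕ :=
  if h : i < n then π ⟨i, h⟩ else 0

theorem permFun_of_lt {i : ℕ} (hi : i < n) : permFun π i = π ⟨i, hi⟩ :=
  dif_pos hi

theorem permFun_coe (i : Fin n) : permFun π i = π i :=
  permFun_of_lt i.2

theorem isPermOn_permFun (π : Equiv.Perm (Fin n)) : IsPermOn n (permFun π) where
  lt i hi := by
    rw [permFun_of_lt hi]
    exact Fin.is_lt _
  inj i j hi hj h := by
    rw [permFun_of_lt hi, permFun_of_lt hj] at h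
    exact congrArg Fin.val (π.injective (Fin.ext h))
  eq_zero i hi := dif_neg hi.not_gt

theorem permFun_injective : Function.Injective (permFun (n := n)) := by
  intro π ρ h
  ext i
  rw [← permFun_coe, h, permFun_coe]

theorem IsPermOn.exists_permFun {p : ℕ → ℕ} (hp : IsPermOn n p) :
    ∃ π : Equiv.Perm (Fin n), permFun π = p := by
  have hinj : Function.Injective fun i : Fin n => (⟨p i, hp.lt i i.2⟩ : Fin n) := fun i j h =>
    Fin.ext (hp.inj i j i.2 j.2 (congrArg Fin.val h))
  refine ⟨Equiv.ofBijective _ (Finite.injective_iff_bijective.mp hinj), ?_⟩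
  funext i
  by_cases hi : i < n
  · exact permFun_of_lt hi
  · rw [permFun, dif_neg hi, hp.eq_zero i (by lia)]

theorem forall_not_forms2143Or3142_permFun_iff :
    (∀ i j k l, i < j → j < k → k < l → l < n → ¬ Forms2143Or3142 (permFun π) i j k l) ↔
      Avoids π p2143 ∧ Avoids π p3142 := by
  rw [Avoids, Avoids, contains_p2143_iff, contains_p3142_iff]
  refine ⟨fun h => ⟨?_, ?_⟩, fun ⟨h, h'⟩ i j k l hij hjk hkl hl => ?_⟩
  · rintro ⟨i, j, k, l, ⟨hij, hjk, hkl⟩, h1, h2, h3⟩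
    refine h i j k l hij hjk hkl l.2 ?_
    simpa only [Forms2143Or3142, permFun_coe, Fin.val_fin_lt] using
      ⟨h1, h1.trans h2, h2.trans h3, h3⟩
  · rintro ⟨i, j, k, l, ⟨hij, hjk, hkl⟩, h1, h2, h3⟩
    refine h i j k l hij hjk hkl l.2 ?_
    simpa only [Forms2143Or3142, permFun_coe, Fin.val_fin_lt] using
      ⟨h1.trans h2, h1, h3, h2.trans h3⟩
  · lift i to Fin n using by lia
    lift j to Fin n using by lia
    lift k to Fin n using by lia
    lift l to Fin n using hl
    rw [Forms2143Or3142, permFun_coe, permFun_coe, permFun_coe, permFun_coe]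
    rintro ⟨h1, h2, h3, h4⟩
    obtain hil | hil | hil := lt_trichotomy (π i) (π l)
    · exact h ⟨i, j, k, l, ⟨hij, hjk, hkl⟩, h1, hil, h4⟩
    · exact absurd (π.injective hil) (by lia)
    · exact h' ⟨i, j, k, l, ⟨hij, hjk, hkl⟩, h2, hil, h3⟩

theorem forall_not_forms246135_permFun_iff :
    (∀ a b c d e f, a < b → b < c → c < d → d < e → e < f → f < n →
      ¬ Forms246135 (permFun π) a b c d e f) ↔ Avoids π p246135 := by
  rw [Avoids, contains_p246135_iff]
  constructor
  · rintro h ⟨a, b, c, d, e, f, ⟨hab, hbc, hcd, hde, hef⟩, hpat⟩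
    refine h a b c d e f hab hbc hcd hde hef f.2 ?_
    simpa only [Forms246135, permFun_coe, Fin.val_fin_lt] using hpat
  · intro h a b c d e f hab hbc hcd hde hef hf hpat
    refine h ⟨⟨a, by lia⟩, ⟨b, by lia⟩, ⟨c, by lia⟩, ⟨d, by lia⟩, ⟨e, by lia⟩, ⟨f, hf⟩,
      ⟨hab, hbc, hcd, hde, hef⟩, ?_⟩
    rwa [Forms246135, permFun_of_lt, permFun_of_lt, permFun_of_lt, permFun_of_lt,
      permFun_of_lt, permFun_of_lt] at hpat

theorem isAvoider_permFun_iff :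
    IsAvoider n (permFun π) ↔ Avoids π p2143 ∧ Avoids π p3142 ∧ Avoids π p246135 := by
  rw [← and_assoc, ← forall_not_forms2143Or3142_permFun_iff, ← forall_not_forms246135_permFun_iff]
  exact ⟨fun h => ⟨h.avoids_2143_3142, h.avoids_246135⟩,
    fun h => ⟨isPermOn_permFun π, h.1, h.2⟩⟩

theorem card_avoiders (n : ℕ) :
    Nat.card {π : Equiv.Perm (Fin n) // Avoids π p2143 ∧ Avoids π p3142 ∧ Avoids π p246135} =
      (avoiders 0 n).ncard := by
  refine Nat.card_congr (Equiv.ofBijective (fun π => (⟨permFun π.1,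
    isAvoider_permFun_iff.mpr π.2, separatedPrefix_zero _ _⟩ : avoiders 0 n)) ⟨?_, ?_⟩)
  · intro π ρ h
    exact Subtype.ext (permFun_injective (congrArg Subtype.val h))
  · rintro ⟨p, hp, hpre⟩
    obtain ⟨π, rfl⟩ := hp.toIsPermOn.exists_permFun
    exact ⟨⟨π, isAvoider_permFun_iff.mp hp⟩, rfl⟩

end Bridge

theorem av_2143_3142_246135_schroeder (n : ℕ) :
    Nat.card {π : Equiv.Perm (Fin (n + 1)) //
        Avoids π p2143 ∧ Avoids π p3142 ∧ Avoids π p246135} =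
      ∑ k ∈ Finset.range (n + 1), Nat.choose (n + k) (n - k) * catalan k := by
  rw [card_avoiders, ncard_avoiders_zero_succ_eq_schroederSum, schroederSum]
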